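/- arXiv:2212.07260 — 16 statements merged into one kernel-verified Lean document; each statement's English description precedes it below -/
import Mathlib

section
/- Let I and J be ideals on a countably infinite set M such that I is tall and J is nowhere tall. Then I and J are orthogonal if and only if I ⊆↾ J. -/
open Set

/-- An ideal on an (infinite) set: contains all finite sets, is proper,
closed under subsets and finite unions. -/
def IsIdeal {α : Type*} (I : Set (Set α)) : Prop :=
  (∀ s : Set α, s.Finite → s ∈ I) ∧ (Set.univ : Set α) ∉ I ∧
  (∀ s t : Set α, s ∈ I → t ⊆ s → t ∈ I) ∧
  (∀ s t : Set α, s ∈ I → t ∈ I → s ∪ t ∈ I)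

/-- `I` is a `P(J)`-ideal. -/
def IsPJIdeal {α : Type*} (I J : Set (Set α)) : Prop :=
  ∀ f : ℕ → Set α, (∀ n, f n ∈ I) → ∃ A ∈ I, ∀ n, f n \ A ∈ J

/-- Orthogonality of two ideals. -/
def Orth {α : Type*} (I J : Set (Set α)) : Prop :=
  ∃ A : Set α, A ∈ I ∧ Aᶜ ∈ J

/-- `I ⊆↾ J` : the whole ideal `I` has a `J`-union in `I`. -/
def SubRestr {α : Type*} (I J : Set (Set α)) : Prop :=
  ∃ E ∈ I, ∀ A ∈ I, A \ E ∈ J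

/-- A tall ideal. -/
def IsTall {α : Type*} (I : Set (Set α)) : Prop :=
  ∀ X : Set α, X.Infinite → ∃ A ∈ I, (X ∩ A).Infinite

/-- A nowhere tall ideal. -/
def NowhereTall {α : Type*} (J : Set (Set α)) : Prop :=
  ∀ A : Set α, A ∉ J → ∃ B ⊆ A, B.Infinite ∧
    (fun j => j ∩ B) '' J = {s : Set α | s ⊆ B ∧ s.Finite}

/-- An almost disjoint family: infinite members, pairwise finite intersections. -/
def IsADFamily {α : Type*} (C : Set (Set α)) : Prop :=
  (∀ A ∈ C, A.Infinite) ∧ ∀ A ∈ C, ∀ B ∈ C, A ≠ B → (A ∩ B).Finite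

/-- The ideal generated by a family `C` (together with the finite sets). -/
def genIdeal {α : Type*} (C : Set (Set α)) : Set (Set α) :=
  {A | ∃ F : Finset (Set α), ↑F ⊆ C ∧ (A \ ⋃₀ ↑F).Finite}

theorem stmt2 {α : Type*} [Countable α] [Infinite α]
    (I J : Set (Set α)) (hI : IsIdeal I) (hJ : IsIdeal J)
    (htall : IsTall I) (hnt : NowhereTall J) :
    Orth I J ↔ SubRestr I J := by
  constructor
  · rintro ⟨A, hA, hAc⟩
    exact ⟨A, hA, fun B _ => hJ.2.2.1 _ _ hAc (fun x hx => hx.2)⟩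
  · rintro ⟨E, hE, h⟩
    refine ⟨E, hE, ?_⟩
    by_contra hn
    obtain ⟨B, hBE, hBinf, hB⟩ := hnt _ hn
    obtain ⟨A, hA, hinf⟩ := htall B hBinf
    have h1 : (A \ E) ∩ B ∈ {s : Set α | s ⊆ B ∧ s.Finite} := by
      rw [← hB]
      exact ⟨A \ E, h A hA, rfl⟩
    exact hinf (h1.2.subset (fun x hx => ⟨⟨hx.2, hBE hx.1⟩, hx.1⟩))
end

section
/- Let J be an ideal on a countably infinite set M and let I₁, I₂ be ideals on M that are not orthogonal and satisfy I₁ ∩ I₂ ⊆ J. Then I₁ and I₂ are both P(J)-ideals if and only if I₁ ∨ I₂ = {A ∪ B : A ∈ I₁, B ∈ I₂} is a P(J)-ideal. -/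
open Set

theorem stmt3 {α : Type*} [Countable α] [Infinite α]
    (I₁ I₂ J : Set (Set α)) (hI₁ : IsIdeal I₁) (hI₂ : IsIdeal I₂) (hJ : IsIdeal J)
    (hno : ¬ Orth I₁ I₂) (hsub : I₁ ∩ I₂ ⊆ J) :
    (IsPJIdeal I₁ J ∧ IsPJIdeal I₂ J) ↔
      IsPJIdeal {X | ∃ A ∈ I₁, ∃ B ∈ I₂, X = A ∪ B} J := by
  obtain ⟨f1, -, s1, u1⟩ := hI₁
  obtain ⟨f2, -, s2, u2⟩ := hI₂
  obtain ⟨-, -, sJ, uJ⟩ := hJ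
  constructor
  · rintro ⟨h1, h2⟩ f hf
    choose a ha b hb hab using hf
    obtain ⟨A, hA, hA'⟩ := h1 a ha
    obtain ⟨B, hB, hB'⟩ := h2 b hb
    refine ⟨A ∪ B, ⟨A, hA, B, hB, rfl⟩, fun n => sJ _ _ (uJ _ _ (hA' n) (hB' n)) ?_⟩
    rw [hab n]
    rintro x ⟨hx | hx, hn⟩
    · exact Or.inl ⟨hx, fun h => hn (Or.inl h)⟩
    · exact Or.inr ⟨hx, fun h => hn (Or.inr h)⟩
  · intro h
    constructor
    · intro f hf
      obtain ⟨X, ⟨A, hA, B, hB, rfl⟩, hX⟩ := h f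
        (fun n => ⟨f n, hf n, ∅, f2 _ Set.finite_empty, (Set.union_empty _).symm⟩)
      refine ⟨A, hA, fun n => sJ _ _ (uJ _ _ (hX n) (hsub (a := f n ∩ B)
        ⟨s1 _ _ (hf n) Set.inter_subset_left, s2 _ _ hB Set.inter_subset_right⟩)) ?_⟩
      rintro x ⟨hx, hn⟩
      by_cases hxB : x ∈ B
      · exact Or.inr ⟨hx, hxB⟩
      · exact Or.inl ⟨hx, fun h => h.elim hn hxB⟩
    · intro f hf
      obtain ⟨X, ⟨A, hA, B, hB, rfl⟩, hX⟩ := h f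
        (fun n => ⟨∅, f1 _ Set.finite_empty, f n, hf n, (Set.empty_union _).symm⟩)
      refine ⟨B, hB, fun n => sJ _ _ (uJ _ _ (hX n) (hsub (a := f n ∩ A)
        ⟨s1 _ _ hA Set.inter_subset_right, s2 _ _ (hf n) Set.inter_subset_left⟩)) ?_⟩
      rintro x ⟨hx, hn⟩
      by_cases hxA : x ∈ A
      · exact Or.inr ⟨hx, hxA⟩
      · exact Or.inl ⟨hx, fun h => h.elim hxA hn⟩
end

section
/- Let I₁, I₂ be ideals on a countably infinite set M that are not orthogonal, and suppose I₂ is a P(I₁)-ideal. Then I₁ ∨ I₂ = {A ∪ B : A ∈ I₁, B ∈ I₂} is a P(I₁)-ideal. -/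
open Set

theorem stmt4 {α : Type*} [Countable α] [Infinite α]
    (I₁ I₂ : Set (Set α)) (hI₁ : IsIdeal I₁) (hI₂ : IsIdeal I₂)
    (hno : ¬ Orth I₁ I₂) (hP : IsPJIdeal I₂ I₁) :
    IsPJIdeal {X | ∃ A ∈ I₁, ∃ B ∈ I₂, X = A ∪ B} I₁ := by
  intro f hf
  choose A hA B hB hf using hf
  obtain ⟨C, hC, h⟩ := hP B hB
  refine ⟨C, ⟨∅, hI₁.1 _ Set.finite_empty, C, hC, by simp⟩, fun n => ?_⟩
  refine hI₁.2.2.1 _ _ (hI₁.2.2.2 _ _ (hA n) (h n)) ?_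
  rw [hf n]
  rintro x ⟨hx | hx, hxC⟩
  · exact Or.inl hx
  · exact Or.inr ⟨hx, hxC⟩
end

section
/- Let M and N be countably infinite sets, let I be an ideal on M that is not tall, and let J be an ideal on N with J ≠ Fin (i.e., J contains some infinite set). Then there exists a bijection f : M → N such that f[A] ∈ J for every A ∈ I. -/
open Set

theorem stmt5 {M N : Type*} [Countable M] [Infinite M] [Countable N] [Infinite N]
    (I : Set (Set M)) (J : Set (Set N)) (hI : IsIdeal I) (hJ : IsIdeal J)
    (hnt : ¬ IsTall I) (hJne : ∃ X ∈ J, X.Infinite) :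
    ∃ f : M ≃ N, ∀ A ∈ I, f '' A ∈ J := by
  obtain ⟨hIfin, hIu, hIs, hIun⟩ := hI
  obtain ⟨hJfin, hJu, hJs, hJun⟩ := hJ
  obtain ⟨Y, hY, hYi⟩ := hJne
  unfold IsTall at hnt
  push Not at hnt
  obtain ⟨X, hX, hXA⟩ := hnt
  have hYc : Yᶜ.Infinite := by
    intro h
    exact hJu (by simpa using hJun _ _ hY (hJfin _ h))
  let g := hX.natEmbedding
  let Z : Set M := Set.range (fun n => (g (2*n) : M))
  have hinj : ∀ a b, (g a : M) = g b → a = b := fun a b h => g.injective (Subtype.ext h)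
  have hZ : Z.Infinite := Set.infinite_range_of_injective (fun a b h => by
    have := hinj _ _ h; omega)
  have hZX : Z ⊆ X := by rintro _ ⟨n, rfl⟩; exact (g (2*n)).2
  have hZc : Zᶜ.Infinite := by
    have h2 : (Set.range (fun n => (g (2*n+1) : M))).Infinite :=
      Set.infinite_range_of_injective (fun a b h => by
        have := hinj _ _ h; omega)
    refine h2.mono ?_
    rintro _ ⟨n, rfl⟩ ⟨m, hm⟩
    have := hinj _ _ hm
    omega
  classical
  have := hZ.to_subtype
  have := hZc.to_subtype
  have := hYi.to_subtype
  have := hYc.to_subtype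
  obtain ⟨e1⟩ : Nonempty (Z ≃ (Yᶜ : Set N)) := nonempty_equiv_of_countable
  obtain ⟨e2⟩ : Nonempty ((Zᶜ : Set M) ≃ Y) := nonempty_equiv_of_countable
  let f : M ≃ N := (Equiv.Set.sumCompl Z).symm.trans
    ((Equiv.sumCongr e1 e2).trans ((Equiv.sumComm _ _).trans (Equiv.Set.sumCompl Y)))
  refine ⟨f, fun A hA => ?_⟩
  have hfin : (X ∩ A).Finite := by simpa using hXA A hA
  refine hJs _ _ (hJun _ _ hY (hJfin _ (hfin.image f))) ?_
  rintro _ ⟨a, ha, rfl⟩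
  by_cases haZ : a ∈ Z
  · exact Or.inr ⟨a, ⟨hZX haZ, ha⟩, rfl⟩
  · left
    have : f a = e2 ⟨a, haZ⟩ := by
      simp [f, Equiv.Set.sumCompl_symm_apply_of_notMem haZ]
    rw [this]
    exact (e2 ⟨a, haZ⟩).2
end

section
/- Let J be an ideal on a countably infinite set M and let C be an infinite almost disjoint family of subsets of M whose union is coinfinite or whose generated family ⟨C⟩ is a proper ideal (for an infinite AD family, ⟨C⟩ = {A ⊆ M : A \ ⋃C' is finite for some finite C' ⊆ C} is always a proper ideal containing Fin). Then the following are equivalent: (1) ⟨C⟩ is a P(J)-ideal; (2) the family {C ∈ C : C ∉ J} is finite; (3) ⟨C⟩ ⊆↾ J. -/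
open Set

theorem stmt6 {α : Type*} [Countable α] [Infinite α]
    (J : Set (Set α)) (C : Set (Set α)) (hJ : IsIdeal J)
    (hC : IsADFamily C) (hCinf : C.Infinite) :
    List.TFAE [
      IsPJIdeal (genIdeal C) J,
      {c ∈ C | c ∉ J}.Finite,
      SubRestr (genIdeal C) J
    ] := by
  obtain ⟨hfin, -, hsub, hun⟩ := hJ
  tfae_have 1 → 2 := by
    intro h
    by_contra hS
    have hS : {c ∈ C | c ∉ J}.Infinite := hS
    let f := hS.natEmbedding
    have hfm : ∀ n, (f n : Set α) ∈ C ∧ (f n : Set α) ∉ J := fun n => (f n).2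
    obtain ⟨A, ⟨F, hFC, hF⟩, hA⟩ := h (fun n => (f n : Set α)) (fun n =>
      ⟨{(f n : Set α)}, by simpa using (hfm n).1, by simp⟩)
    have hinj : Function.Injective (fun n => (f n : Set α)) :=
      Subtype.val_injective.comp f.injective
    obtain ⟨n, hn⟩ : ∃ n, (f n : Set α) ∉ F := by
      by_contra hcon
      push Not at hcon
      exact (Set.infinite_range_of_injective hinj) (F.finite_toSet.subset (by
        rintro _ ⟨n, rfl⟩
        exact hcon n))
    have h1 : (⋃ c ∈ (F : Set (Set α)), (f n : Set α) ∩ c).Finite := by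
      refine F.finite_toSet.biUnion (fun c hc => ?_)
      refine hC.2 _ (hfm n).1 c (hFC hc) ?_
      rintro rfl
      exact hn hc
    refine (hfm n).2 (hsub _ _ (hun _ _ (hA n) (hfin _ (h1.union hF))) ?_)
    intro x hx
    by_cases hxA : x ∈ A
    · right
      by_cases hxF : x ∈ ⋃₀ (F : Set (Set α))
      · left
        obtain ⟨c, hc, hxc⟩ := hxF
        exact Set.mem_biUnion hc ⟨hx, hxc⟩
      · exact Or.inr ⟨hxA, hxF⟩
    · exact Or.inl ⟨hx, hxA⟩
  tfae_have 2 → 3 := by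
    intro h
    refine ⟨⋃₀ {c ∈ C | c ∉ J}, ⟨h.toFinset, ?_, ?_⟩, ?_⟩
    · intro c hc
      rw [h.coe_toFinset] at hc
      exact hc.1
    · rw [h.coe_toFinset, Set.sdiff_self]
      exact Set.finite_empty
    · rintro A ⟨F, hFC, hF⟩
      have key : ∀ T : Set (Set α), T.Finite → T ⊆ J → ⋃₀ T ∈ J := by
        intro T hT
        induction T, hT using Set.Finite.induction_on with
        | empty => intro _; simpa using hfin ∅ Set.finite_empty
        | insert _ _ ih =>
          intro hTJ
          rw [Set.sUnion_insert]
          exact hun _ _ (hTJ (Set.mem_insert _ _))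
            (ih ((Set.subset_insert _ _).trans hTJ))
      have hk := key ((F : Set (Set α)) ∩ J) (F.finite_toSet.inter_of_left _)
        Set.inter_subset_right
      refine hsub _ _ (hun _ _ (hfin _ hF) hk) ?_
      rintro x ⟨hxA, hxE⟩
      by_cases hxF : x ∈ ⋃₀ (F : Set (Set α))
      · right
        obtain ⟨c, hc, hxc⟩ := hxF
        refine ⟨c, ⟨hc, ?_⟩, hxc⟩
        by_contra hcJ
        exact hxE ⟨c, ⟨hFC hc, hcJ⟩, hxc⟩
      · exact Or.inl ⟨hxA, hxF⟩
  tfae_have 3 → 1 := by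
    rintro ⟨E, hE, hEA⟩ f hf
    exact ⟨E, hE, fun n => hEA _ (hf n)⟩
  tfae_finish
end

section
/- Let A = {A_n : n ∈ ℕ} be a partition of ℕ×ℕ into infinitely many infinite sets and let J be an ideal on ℕ×ℕ. The following are equivalent: (1) Fin(A) is a P(J)-ideal; (2) FinFin(A) is a P(J)-ideal; (3) A_n ∈ J for all but finitely many n; (4) Fin(A) ⊆↾ J. -/
open Set

/-- The `n`-th vertical `{n} × ℕ` in `ℕ × ℕ`. -/
def Vert (n : ℕ) : Set (ℕ × ℕ) := {p | p.1 = n}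

/-- A partition of `ℕ × ℕ` into infinitely many infinite sets (indexed by `ℕ`). -/
def IsPartition (A : ℕ → Set (ℕ × ℕ)) : Prop :=
  (∀ n, (A n).Infinite) ∧ (∀ i j, i ≠ j → A i ∩ A j = ∅) ∧ (⋃ n, A n) = Set.univ

/-- `Fin(A)`: the ideal generated by the partition `A`. -/
def FinPart (A : ℕ → Set (ℕ × ℕ)) : Set (Set (ℕ × ℕ)) :=
  {X | ∃ F : Finset ℕ, (X \ ⋃ n ∈ F, A n).Finite}

/-- `OFin(A)`: sets with finite intersection with each member of `A`. -/
def OFinPart (A : ℕ → Set (ℕ × ℕ)) : Set (Set (ℕ × ℕ)) :=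
  {X | ∀ n, (X ∩ A n).Finite}

/-- `FinFin(A)`: the ideal generated by `Fin(A) ∪ OFin(A)`. -/
def FinFinPart (A : ℕ → Set (ℕ × ℕ)) : Set (Set (ℕ × ℕ)) :=
  {X | ∃ Y ∈ FinPart A, ∃ Z ∈ OFinPart A, X ⊆ Y ∪ Z}

/-- `Sel(A)`: sets meeting each member of `A` in at most `m` points, for some `m`. -/
def SelPart (A : ℕ → Set (ℕ × ℕ)) : Set (Set (ℕ × ℕ)) :=
  {X | ∃ m : ℕ, ∀ n, (X ∩ A n).encard ≤ (m : ℕ∞)}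

/-- `ED(A)`: sets meeting all but finitely many members of `A` in at most `m` points. -/
def EDPart (A : ℕ → Set (ℕ × ℕ)) : Set (Set (ℕ × ℕ)) :=
  {X | ∃ m : ℕ, {n | (m : ℕ∞) < (X ∩ A n).encard}.Finite}

/-- The ideal `Sel` on `ℕ × ℕ` (w.r.t. the vertical partition). -/
def SelI : Set (Set (ℕ × ℕ)) := SelPart Vert

/-- The ideal `ED` on `ℕ × ℕ` (w.r.t. the vertical partition). -/
def EDI : Set (Set (ℕ × ℕ)) := EDPart Vert

/-- The ideal `Fin × ∅` on `ℕ × ℕ`, generated by the verticals. -/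
def FinVert : Set (Set (ℕ × ℕ)) := FinPart Vert

lemma aux_biUnion_mem {J : Set (Set (ℕ × ℕ))} (hJ : IsIdeal J) (B : ℕ → Set (ℕ × ℕ))
    (F : Finset ℕ) (h : ∀ n ∈ F, B n ∈ J) : (⋃ n ∈ F, B n) ∈ J := by
  classical
  induction F using Finset.induction_on with
  | empty => simpa using hJ.1 ∅ Set.finite_empty
  | insert a s ha ih =>
    rw [Finset.set_biUnion_insert]
    exact hJ.2.2.2 _ _ (h a (by simp)) (ih fun n hn => h n (by simp [hn]))

lemma aux_to3 {A : ℕ → Set (ℕ × ℕ)} (hA : IsPartition A)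
    {J : Set (Set (ℕ × ℕ))} (hJ : IsIdeal J) (E : Set (ℕ × ℕ)) (hE : E ∈ FinFinPart A)
    (h : ∀ n, A n \ E ∈ J) : {n | A n ∉ J}.Finite := by
  obtain ⟨Y, ⟨F, hF⟩, Z, hZ, hYZ⟩ := hE
  refine F.finite_toSet.subset fun n hn => ?_
  by_contra hnF
  apply hn
  have hfin : ((Y \ ⋃ n ∈ F, A n) ∪ (Z ∩ A n)).Finite := hF.union (hZ n)
  refine hJ.2.2.1 _ _ (hJ.2.2.2 _ _ (h n) (hJ.1 _ hfin)) fun x hx => ?_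
  by_cases hxE : x ∈ E
  · right
    rcases hYZ hxE with hy | hz
    · left
      refine ⟨hy, fun hu => ?_⟩
      simp only [Set.mem_iUnion] at hu
      obtain ⟨k, hk, hxk⟩ := hu
      have hne : k ≠ n := fun e => hnF (by simpa [e] using hk)
      have := hA.2.1 k n hne
      exact (Set.mem_empty_iff_false x).1 (this ▸ ⟨hxk, hx⟩)
    · exact Or.inr ⟨hz, hx⟩
  · exact Or.inl ⟨hx, hxE⟩

lemma aux_3to4 {A : ℕ → Set (ℕ × ℕ)}
    {J : Set (Set (ℕ × ℕ))} (hJ : IsIdeal J) (G : Finset ℕ) (hG : ∀ n, n ∉ G → A n ∈ J)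
    (X : Set (ℕ × ℕ)) (hX : X ∈ FinPart A) : X \ (⋃ n ∈ G, A n) ∈ J := by
  classical
  obtain ⟨F, hF⟩ := hX
  have h1 := aux_biUnion_mem hJ A (F \ G) fun n hn => hG n (Finset.mem_sdiff.1 hn).2
  refine hJ.2.2.1 _ _ (hJ.2.2.2 _ _ (hJ.1 _ hF) h1) ?_
  rintro x ⟨hx, hxG⟩
  by_cases hu : x ∈ ⋃ n ∈ F, A n
  · right
    simp only [Set.mem_iUnion, Finset.mem_sdiff] at hu hxG ⊢
    obtain ⟨k, hk, hxk⟩ := hu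
    exact ⟨k, ⟨hk, fun hkG => hxG ⟨k, hkG, hxk⟩⟩, hxk⟩
  · exact Or.inl ⟨hx, hu⟩

lemma aux_ofin {A : ℕ → Set (ℕ × ℕ)} (hA : IsPartition A) (Z : ℕ → Set (ℕ × ℕ))
    (hZ : ∀ n, Z n ∈ OFinPart A) : ∃ W ∈ OFinPart A, ∀ n, (Z n \ W).Finite := by
  refine ⟨{x | ∃ n m, n < m ∧ x ∈ Z n ∧ x ∈ A m}, fun m => ?_, fun n => ?_⟩
  · refine ((Set.finite_Iio m).biUnion fun n _ => hZ n m).subset ?_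
    rintro x ⟨⟨n, k, hnk, hxn, hxk⟩, hxm⟩
    have hkm : k = m := by
      by_contra hne
      exact (Set.mem_empty_iff_false x).1 (hA.2.1 k m hne ▸ ⟨hxk, hxm⟩)
    subst hkm
    exact Set.mem_biUnion (Set.mem_Iio.2 hnk) ⟨hxn, hxm⟩
  · refine ((Set.finite_Iic n).biUnion fun k _ => hZ n k).subset ?_
    rintro x ⟨hx, hxW⟩
    have hu : x ∈ ⋃ n, A n := hA.2.2 ▸ Set.mem_univ x
    obtain ⟨k, hk⟩ := Set.mem_iUnion.1 hu
    refine Set.mem_biUnion (Set.mem_Iic.2 ?_) ⟨hx, hk⟩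
    by_contra hlt
    exact hxW ⟨n, k, not_le.1 hlt, hx, hk⟩

theorem stmt7 (A : ℕ → Set (ℕ × ℕ)) (hA : IsPartition A)
    (J : Set (Set (ℕ × ℕ))) (hJ : IsIdeal J) :
    List.TFAE [
      IsPJIdeal (FinPart A) J,
      IsPJIdeal (FinFinPart A) J,
      {n | A n ∉ J}.Finite,
      SubRestr (FinPart A) J
    ] := by
  have hsub : FinPart A ⊆ FinFinPart A := fun X hX =>
    ⟨X, hX, ∅, fun n => by simp, Set.subset_union_left⟩
  have hAn : ∀ n, A n ∈ FinPart A := fun n => ⟨{n}, by simp⟩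
  have hU : ∀ G : Finset ℕ, (⋃ n ∈ G, A n) ∈ FinPart A := fun G => ⟨G, by simp⟩
  tfae_have 1 → 3 := by
    intro h
    obtain ⟨E, hE, h'⟩ := h A hAn
    exact aux_to3 hA hJ E (hsub hE) h'
  tfae_have 2 → 3 := by
    intro h
    obtain ⟨E, hE, h'⟩ := h A fun n => hsub (hAn n)
    exact aux_to3 hA hJ E hE h'
  tfae_have 3 → 4 := by
    intro h
    refine ⟨⋃ n ∈ h.toFinset, A n, hU _, fun X hX => aux_3to4 hJ _ ?_ X hX⟩
    intro n hn
    simpa using hn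
  tfae_have 4 → 1 := by
    rintro ⟨E, hE, h⟩ f hf
    exact ⟨E, hE, fun n => h _ (hf n)⟩
  tfae_have 3 → 2 := by
    intro h f hf
    choose Y hY Z hZ hYZ using hf
    obtain ⟨W, hW, hZW⟩ := aux_ofin hA Z hZ
    refine ⟨(⋃ n ∈ h.toFinset, A n) ∪ W, ⟨_, hU _, W, hW, subset_rfl⟩, fun n => ?_⟩
    have h1 := aux_3to4 hJ h.toFinset (fun n hn => by simpa using hn) (Y n) (hY n)
    refine hJ.2.2.1 _ _ (hJ.2.2.2 _ _ h1 (hJ.1 _ (hZW n))) ?_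
    rintro x ⟨hx, hxE⟩
    rcases hYZ n hx with hy | hz
    · exact Or.inl ⟨hy, fun hu => hxE (Or.inl hu)⟩
    · exact Or.inr ⟨hz, fun hu => hxE (Or.inr hu)⟩
  tfae_finish
end

section
/- Let A = {A_n : n ∈ ℕ} be a partition of ℕ×ℕ into infinitely many infinite sets. The following are equivalent: (1) Fin(A) is a P(Fin×∅)-ideal; (2) for all but finitely many n, A_n ∩ V_m = ∅ holds for all but finitely many m; (3) there exists a cofinite set F ⊆ ℕ such that X ∩ ⋃_{k∈F} A_k ∈ Fin×∅ for every X ∈ Fin(A); (4) A_n ∈ Fin×∅ for all but finitely many n. -/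
open Set

theorem finVert_iff (X : Set (ℕ × ℕ)) : X ∈ FinVert ↔ (Prod.fst '' X).Finite := by
  constructor
  · rintro ⟨F, hF⟩
    refine ((hF.image Prod.fst).union F.finite_toSet).subset ?_
    rintro _ ⟨p, hp, rfl⟩
    by_cases h : p.1 ∈ F
    · exact Or.inr h
    · left
      refine ⟨p, ⟨hp, ?_⟩, rfl⟩
      simp [Vert, h]
  · intro h
    refine ⟨h.toFinset, ?_⟩
    convert Set.finite_empty
    rw [Set.diff_eq_empty]
    intro p hp
    simp only [Set.mem_iUnion, Set.Finite.mem_toFinset]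
    exact ⟨p.1, ⟨p, hp, rfl⟩, rfl⟩

theorem stmt8 (A : ℕ → Set (ℕ × ℕ)) (hA : IsPartition A) :
    List.TFAE [
      IsPJIdeal (FinPart A) FinVert,
      {n | ¬ {m | (A n ∩ Vert m).Nonempty}.Finite}.Finite,
      ∃ F : Set ℕ, Fᶜ.Finite ∧ ∀ X ∈ FinPart A, (X ∩ ⋃ k ∈ F, A k) ∈ FinVert,
      {n | A n ∉ FinVert}.Finite
    ] := by
  obtain ⟨-, hdisj, hcov⟩ := hA
  have e : ∀ n, {m | (A n ∩ Vert m).Nonempty} = Prod.fst '' A n := by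
    intro n
    ext m
    rfl
  tfae_have 2 ↔ 4 := by
    simp only [e, finVert_iff]
  tfae_have 1 → 4 := by
    intro h
    obtain ⟨B, ⟨F, hF⟩, hB⟩ := h A (fun n => ⟨{n}, by simp⟩)
    refine F.finite_toSet.subset ?_
    intro n hn
    by_contra hnF
    apply hn
    rw [finVert_iff]
    have h1 := (finVert_iff _).1 (hB n)
    refine (h1.union (hF.image Prod.fst)).subset ?_
    rw [← Set.image_union]
    apply Set.image_mono
    intro p hp
    by_cases hpB : p ∈ B
    · right
      refine ⟨hpB, ?_⟩
      simp only [Set.mem_iUnion, not_exists]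
      intro k hk hpk
      have hne : n ≠ k := by
        rintro rfl
        exact hnF hk
      have : p ∈ A n ∩ A k := ⟨hp, hpk⟩
      rw [hdisj n k hne] at this
      exact this
    · exact Or.inl ⟨hp, hpB⟩
  tfae_have 4 → 3 := by
    intro h
    refine ⟨{n | A n ∈ FinVert}, h, ?_⟩
    rintro X ⟨G, hG⟩
    rw [finVert_iff]
    have h2 : (⋃ k ∈ {k | k ∈ G ∧ A k ∈ FinVert}, Prod.fst '' A k).Finite := by
      apply Set.Finite.biUnion (G.finite_toSet.subset fun k hk => hk.1)
      intro k hk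
      exact (finVert_iff _).1 hk.2
    refine ((hG.image Prod.fst).union h2).subset ?_
    rintro _ ⟨p, ⟨hpX, hp⟩, rfl⟩
    simp only [Set.mem_iUnion] at hp
    obtain ⟨k, hk, hpk⟩ := hp
    by_cases hkG : k ∈ G
    · right
      simp only [Set.mem_iUnion]
      exact ⟨k, ⟨hkG, hk⟩, p, hpk, rfl⟩
    · left
      refine ⟨p, ⟨hpX, ?_⟩, rfl⟩
      simp only [Set.mem_iUnion, not_exists]
      intro j hj hpj
      have hne : k ≠ j := by
        rintro rfl
        exact hkG hj
      have : p ∈ A k ∩ A j := ⟨hpk, hpj⟩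
      rw [hdisj k j hne] at this
      exact this
  tfae_have 3 → 1 := by
    rintro ⟨F, hF, h⟩ f hf
    refine ⟨⋃ k ∈ Fᶜ, A k, ⟨hF.toFinset, by simp⟩, ?_⟩
    intro n
    rw [finVert_iff]
    refine ((finVert_iff _).1 (h _ (hf n))).subset (Set.image_mono ?_)
    rintro p ⟨hp, hpE⟩
    refine ⟨hp, ?_⟩
    have hc : p ∈ ⋃ n, A n := hcov ▸ Set.mem_univ p
    obtain ⟨k, hk⟩ := Set.mem_iUnion.1 hc
    simp only [Set.mem_iUnion] at hpE ⊢
    refine ⟨k, ?_, hk⟩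
    by_contra hkF
    exact hpE ⟨k, hkF, hk⟩
  tfae_finish
end

section
/- For every k ∈ ℕ let T_k = {g_i^k : i < k} be a (k,k)-tower of functions, and assume dom(T_i) ∩ dom(T_j) = ∅ whenever i ≠ j. Let F be a finite set of functions from ℕ to ℕ (identified with their graphs). Then there exists i ≤ |F| such that for every m ∈ ℕ there exists n ≥ m with n > i and |g_i^n \ ⋃_{f∈F} f| ≥ m. -/
/-- A subset of `ℕ × ℕ` is the graph of a partial function from `ℕ` to `ℕ`. -/
def IsPFunGraph (g : Set (ℕ × ℕ)) : Prop :=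
  ∀ p ∈ g, ∀ q ∈ g, p.1 = q.1 → p = q

/-- The domain of (the graph of) a partial function. -/
def pdom (g : Set (ℕ × ℕ)) : Set ℕ := Prod.fst '' g

/-- The graph of a total function `ℕ → ℕ`. -/
def totGraph (f : ℕ → ℕ) : Set (ℕ × ℕ) := {p | f p.1 = p.2}

/-- A `(κ, lam)`-tower of functions: `lam` many pairwise disjoint nonempty
partial functions from `ℕ` to `ℕ`, all with the same domain of cardinality `κ`. -/
def IsTower (κ lam : ℕ∞) (T : Set (Set (ℕ × ℕ))) : Prop :=
  T.encard = lam ∧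
  (∀ g ∈ T, IsPFunGraph g ∧ g.Nonempty) ∧
  (∃ a : Set ℕ, a.encard = κ ∧ ∀ g ∈ T, pdom g = a) ∧
  (∀ g ∈ T, ∀ g' ∈ T, g ≠ g' → g ∩ g' = ∅)

/-- A `(κ, lam)`-tower of `B`-monochromatic functions. -/
def IsMonoTower (B : ℕ → Set (ℕ × ℕ)) (κ lam : ℕ∞) (T : Set (Set (ℕ × ℕ))) : Prop :=
  IsTower κ lam T ∧ ∀ g ∈ T, ∃ n, g ⊆ B n

/-- The (indices of the) colors used by a tower: `C_T`. -/
def towerColors (B : ℕ → Set (ℕ × ℕ)) (T : Set (Set (ℕ × ℕ))) : Set ℕ :=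
  {n | ∃ g ∈ T, g ⊆ B n}

/-- The domain of a tower: `dom(T)`. -/
def towerDom (T : Set (Set (ℕ × ℕ))) : Set ℕ := ⋃ g ∈ T, pdom g

/-- A sequence of essentially different towers: pairwise disjoint color sets
and pairwise disjoint domains. -/
def EssDiff (B : ℕ → Set (ℕ × ℕ)) (T : ℕ → Set (Set (ℕ × ℕ))) : Prop :=
  ∀ i j, i ≠ j → towerColors B (T i) ∩ towerColors B (T j) = ∅ ∧
    towerDom (T i) ∩ towerDom (T j) = ∅

theorem stmt10 (g : ℕ → ℕ → Set (ℕ × ℕ))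
    (htower : ∀ k : ℕ, IsTower (k : ℕ∞) (k : ℕ∞) (g k '' Set.Iio k))
    (hdom : ∀ i j : ℕ, i ≠ j →
      towerDom (g i '' Set.Iio i) ∩ towerDom (g j '' Set.Iio j) = ∅)
    (F : Finset (ℕ → ℕ)) :
    ∃ i ≤ F.card, ∀ m : ℕ, ∃ n : ℕ, m ≤ n ∧ i < n ∧
      (m : ℕ∞) ≤ (g n i \ ⋃ f ∈ F, totGraph f).encard := by
  classical
  by_contra hcon
  push Not at hcon
  choose! M hM using hcon
  set N := F.card with hN
  let B := (Finset.range (N + 1)).sup M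
  have hB : ∀ i ≤ N, M i ≤ B := fun i hi =>
    Finset.le_sup (f := M) (Finset.mem_range.2 (by omega))
  let n := (N + 1) * B + B + N + 1
  have hnB : B ≤ n := by
    have := Nat.zero_le ((N + 1) * B)
    omega
  have hnN : N < n := by
    have := Nat.zero_le ((N + 1) * B)
    omega
  have hnm : (N + 1) * B < n := by omega
  obtain ⟨hc, hpf, ⟨a, ha, hdoma⟩, hdis⟩ := htower n
  have hfin : (Set.Iio n).Finite := Set.finite_Iio n
  have hinj : Set.InjOn (g n) (Set.Iio n) := by
    apply hfin.injOn_of_encard_image_eq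
    rw [hc, ← Finset.coe_Iio, Set.encard_coe_eq_coe_finsetCard]
    simp
  have key : ∀ x ∈ a, ∃ i ∈ Finset.range (N + 1),
      x ∈ Prod.fst '' (g n i \ ⋃ f ∈ F, totGraph f) := by
    intro x hx
    by_contra hno
    push Not at hno
    have h1 : ∀ i ∈ Finset.range (N + 1), ∃ f ∈ F, (x, f x) ∈ g n i := by
      intro i hi
      have hin : i < n := by
        have := Finset.mem_range.1 hi
        omega
      have hxi : x ∈ pdom (g n i) := by
        rw [hdoma (g n i) ⟨i, hin, rfl⟩]
        exact hx
      obtain ⟨p, hp, rfl⟩ := hxi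
      by_cases hU : p ∈ ⋃ f ∈ F, totGraph f
      · simp only [Set.mem_iUnion] at hU
        obtain ⟨f, hf, hfp⟩ := hU
        refine ⟨f, hf, ?_⟩
        have : f p.1 = p.2 := hfp
        rw [this]
        exact hp
      · exact absurd ⟨p, ⟨hp, hU⟩, rfl⟩ (hno i hi)
    choose! φ hφ hφ2 using h1
    obtain ⟨i, hi, j, hj, hij, he⟩ := Finset.exists_ne_map_eq_of_card_lt_of_maps_to
      (s := Finset.range (N + 1)) (t := F) (by simp [hN]) (f := φ) hφ
    have hin : i < n := by
      have := Finset.mem_range.1 hi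
      omega
    have hjn : j < n := by
      have := Finset.mem_range.1 hj
      omega
    have hne : g n i ≠ g n j := fun h => hij (hinj hin hjn h)
    have hd := hdis _ ⟨i, hin, rfl⟩ _ ⟨j, hjn, rfl⟩ hne
    have hmem : (x, φ i x) ∈ g n i ∩ g n j := by
      refine ⟨hφ2 i hi, ?_⟩
      rw [he]
      exact hφ2 j hj
    rw [hd] at hmem
    exact hmem
  choose! ι hι hι2 using key
  have hafin : a.Finite := Set.finite_of_encard_eq_coe ha
  have hcard : hafin.toFinset.card = n := by
    rw [hafin.encard_eq_coe_toFinset_card] at ha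
    exact_mod_cast ha
  obtain ⟨i, hi, hlt⟩ := Finset.exists_lt_card_fiber_of_mul_lt_card_of_maps_to
    (s := hafin.toFinset) (t := Finset.range (N + 1)) (f := ι) (n := B)
    (fun x hx => hι x (hafin.mem_toFinset.1 hx)) (by rw [hcard, Finset.card_range]; exact hnm)
  have hiN : i ≤ N := by
    have := Finset.mem_range.1 hi
    omega
  have h2 := hM i hiN n ((hB i hiN).trans hnB) (by omega)
  have hsub : ((hafin.toFinset.filter (fun x => ι x = i) : Finset ℕ) : Set ℕ) ⊆
      Prod.fst '' (g n i \ ⋃ f ∈ F, totGraph f) := by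
    intro x hx
    have hx' := Finset.mem_filter.1 (Finset.mem_coe.1 hx)
    have := hι2 x (hafin.mem_toFinset.1 hx'.1)
    rwa [hx'.2] at this
  have h3 := (Set.encard_le_encard hsub).trans (Set.encard_image_le _ _)
  rw [Set.encard_coe_eq_coe_finsetCard] at h3
  have h4 := h3.trans_lt h2
  have h5 : (hafin.toFinset.filter (fun x => ι x = i)).card < M i := by exact_mod_cast h4
  have := hB i hiN
  omega
end

section
/- Let B be a partition of ℕ×ℕ into infinitely many infinite sets. If the ideal Sel on ℕ×ℕ is a P(Sel(B))-ideal, then there exists k ∈ ℕ such that there is no (k,k)-tower of B-monochromatic functions. -/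
open Set

theorem tower_extract (B : ℕ → Set (ℕ × ℕ)) (k : ℕ) (T : Set (Set (ℕ × ℕ)))
    (hT : IsMonoTower B (k : ℕ∞) (k : ℕ∞) T) :
    ∃ a : Finset ℕ, ∃ g : ℕ → ℕ → ℕ, a.card = k ∧
      (∀ i < k, ∃ c, ∀ x ∈ a, (x, g i x) ∈ B c) ∧
      (∀ i < k, ∀ j < k, i ≠ j → ∀ x ∈ a, g i x ≠ g j x) := by
  classical
  obtain ⟨⟨hc, hp, ⟨a, hak, had⟩, hdis⟩, hm⟩ := hT
  have haf : a.Finite := Set.finite_of_encard_eq_coe hak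
  have hTf : T.Finite := Set.finite_of_encard_eq_coe hc
  have hTc : hTf.toFinset.card = k := by
    have := hTf.encard_eq_coe_toFinset_card
    rw [hc] at this
    exact_mod_cast this.symm
  have hac : haf.toFinset.card = k := by
    have := haf.encard_eq_coe_toFinset_card
    rw [hak] at this
    exact_mod_cast this.symm
  let e := (hTf.toFinset.equivFinOfCardEq hTc).symm
  have heT : ∀ i, (e i : Set (ℕ × ℕ)) ∈ T := fun i => hTf.mem_toFinset.1 (e i).2
  have hex : ∀ i : ℕ, ∀ x : ℕ, ∃ y : ℕ, ∀ hi : i < k, x ∈ a → (x, y) ∈ (e ⟨i, hi⟩ : Set (ℕ × ℕ)) := by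
    intro i x
    by_cases hi : i < k
    · by_cases hx : x ∈ a
      · rw [← had _ (heT ⟨i, hi⟩)] at hx
        obtain ⟨⟨x', y⟩, h1, h2⟩ := hx
        simp only at h2
        subst h2
        exact ⟨y, fun _ _ => h1⟩
      · exact ⟨0, fun _ h => absurd h hx⟩
    · exact ⟨0, fun h => absurd h hi⟩
  choose g hg using hex
  refine ⟨haf.toFinset, g, hac, ?_, ?_⟩
  · intro i hi
    obtain ⟨c, hc⟩ := hm _ (heT ⟨i, hi⟩)
    exact ⟨c, fun x hx => hc (hg i x hi (by simpa using hx))⟩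
  · intro i hi j hj hij x hx heq
    have hx' : x ∈ a := by simpa using hx
    have hne : (e ⟨i, hi⟩ : Set (ℕ × ℕ)) ≠ e ⟨j, hj⟩ := by
      intro h
      have := e.injective (Subtype.ext h)
      simp at this
      exact hij this
    have h1 := hg i x hi hx'
    have h2 := hg j x hj hx'
    rw [← heq] at h2
    have h3 := hdis _ (heT _) _ (heT _) hne
    have : (x, g i x) ∈ (∅ : Set (ℕ × ℕ)) := h3 ▸ ⟨h1, h2⟩
    exact this

theorem stmt11 (B : ℕ → Set (ℕ × ℕ)) (hB : IsPartition B)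
    (h : IsPJIdeal SelI (SelPart B)) :
    ∃ k : ℕ, ∀ T : Set (Set (ℕ × ℕ)), ¬ IsMonoTower B (k : ℕ∞) (k : ℕ∞) T := by
  classical
  by_contra hcon
  push Not at hcon
  have hex := fun k : ℕ => let ⟨T, hT⟩ := hcon (3 ^ k); tower_extract B (3 ^ k) T hT
  choose a g hcard hmono hdist using hex
  let d : ℕ → Finset ℕ := fun k => a k \ (Finset.range k).biUnion a
  have hda : ∀ k x, x ∈ d k → x ∈ a k := fun k x hx => (Finset.mem_sdiff.1 hx).1
  have hdd : ∀ k l x, x ∈ d k → x ∈ d l → k = l := by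
    intro k l x hk hl
    rcases lt_trichotomy k l with h1 | h1 | h1
    · exact absurd (Finset.mem_biUnion.2 ⟨k, Finset.mem_range.2 h1, hda _ _ hk⟩)
        (Finset.mem_sdiff.1 hl).2
    · exact h1
    · exact absurd (Finset.mem_biUnion.2 ⟨l, Finset.mem_range.2 h1, hda _ _ hl⟩)
        (Finset.mem_sdiff.1 hk).2
  have hsum : ∀ k : ℕ, (∑ j ∈ Finset.range k, 3 ^ j) + k ≤ 3 ^ k := by
    intro k
    induction k with
    | zero => simp
    | succ k ih =>
      rw [Finset.sum_range_succ, pow_succ]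
      have : 0 < 3 ^ k := by positivity
      omega
  have hdc : ∀ k, k ≤ (d k).card := by
    intro k
    have h1 : ((Finset.range k).biUnion a).card ≤ ∑ j ∈ Finset.range k, 3 ^ j := by
      refine Finset.card_biUnion_le.trans (Finset.sum_le_sum fun j _ => ?_)
      have := hcard j
      omega
    have h2 := Finset.le_card_sdiff ((Finset.range k).biUnion a) (a k)
    have h3 := hsum k
    have h4 := hcard k
    change k ≤ (a k \ (Finset.range k).biUnion a).card
    omega
  have hk3 : ∀ k : ℕ, k ≤ 3 ^ k := fun k => by have := hsum k; omega
  let f : ℕ → Set (ℕ × ℕ) := fun n => {p | ∃ k, n < k ∧ p.1 ∈ d k ∧ p.2 = g k n p.1}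
  have hf : ∀ n, f n ∈ SelI := by
    intro n
    refine ⟨1, fun x => ?_⟩
    rw [Nat.cast_one, Set.encard_le_one_iff]
    rintro ⟨p1, p2⟩ ⟨q1, q2⟩ ⟨⟨k, hk, hp, hp2⟩, hpx⟩ ⟨⟨l, hl, hq, hq2⟩, hqx⟩
    simp only [Vert, Set.mem_ofPred_eq] at *
    subst hpx
    subst hqx
    have := hdd _ _ _ hp hq
    subst this
    rw [hp2, hq2]
  obtain ⟨A, ⟨m, hA⟩, hAf⟩ := h f hf
  choose c hc using hAf
  let k := (∑ n ∈ Finset.range (m + 1), c n) + m + 1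
  let bad : ℕ → Finset ℕ := fun n => (d k).filter fun x => (x, g k n x) ∉ A
  have hbad : ∀ n ∈ Finset.range (m + 1), (bad n).card ≤ c n := by
    intro n hn
    have hnk : n < k := by
      have := Finset.mem_range.1 hn
      omega
    obtain ⟨t, ht⟩ := hmono k n (hnk.trans_le (hk3 k))
    have h1 : (((bad n).image fun x => (x, g k n x) : Finset (ℕ × ℕ)) : Set (ℕ × ℕ)) ⊆
        (f n \ A) ∩ B t := by
      intro p hp
      obtain ⟨x, hx, rfl⟩ := Finset.mem_image.1 (Finset.mem_coe.1 hp)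
      obtain ⟨hx1, hx2⟩ := Finset.mem_filter.1 hx
      exact ⟨⟨⟨k, hnk, hx1, rfl⟩, hx2⟩, ht x (hda _ _ hx1)⟩
    have h2 := (Set.encard_le_encard h1).trans (hc n t)
    rw [Set.encard_coe_eq_coe_finsetCard, Finset.card_image_of_injective _
      (fun x y hxy => (Prod.mk.inj hxy).1)] at h2
    exact_mod_cast h2
  have hlt : ((Finset.range (m + 1)).biUnion bad).card < (d k).card := by
    have h1 := Finset.card_biUnion_le.trans (Finset.sum_le_sum hbad)
    have h2 := hdc k
    omega
  obtain ⟨x, hx, hxb⟩ := Finset.exists_mem_notMem_of_card_lt_card hlt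
  have hsub : (((Finset.range (m + 1)).image fun n => (x, g k n x) : Finset (ℕ × ℕ)) :
      Set (ℕ × ℕ)) ⊆ A ∩ Vert x := by
    intro p hp
    obtain ⟨n, hn, rfl⟩ := Finset.mem_image.1 (Finset.mem_coe.1 hp)
    refine ⟨?_, rfl⟩
    by_contra hnA
    exact hxb (Finset.mem_biUnion.2 ⟨n, hn, Finset.mem_filter.2 ⟨hx, hnA⟩⟩)
  have h2 := (Set.encard_le_encard hsub).trans (hA x)
  rw [Set.encard_coe_eq_coe_finsetCard, Finset.card_image_of_injOn, Finset.card_range] at h2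
  · have : m + 1 ≤ m := by exact_mod_cast h2
    omega
  · intro i hi j hj hij
    have hi' := Finset.mem_range.1 (Finset.mem_coe.1 hi)
    have hj' := Finset.mem_range.1 (Finset.mem_coe.1 hj)
    have := hk3 k
    by_contra hne
    exact hdist k i (by omega) j (by omega) hne x (hda _ _ hx) (Prod.mk.inj hij).2
end

section
/- Let B be a partition of ℕ×ℕ into infinitely many infinite sets. If the ideal Sel on ℕ×ℕ is a P(ED(B))-ideal, then there is no sequence ⟨T_k : k ∈ ℕ⟩ of essentially different towers such that each T_k is a (k,k)-tower of B-monochromatic functions. -/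
open Set

lemma aux_union {α : Type*} (N : ℕ) (S : ℕ → Set α) (M : ℕ → ℕ)
    (hS : ∀ n < N, (S n).encard ≤ (M n : ℕ∞)) :
    ({x | ∃ n < N, x ∈ S n}).encard ≤ ((∑ n ∈ Finset.range N, M n : ℕ) : ℕ∞) := by
  induction N with
  | zero => simp
  | succ N ih =>
    have h1 : {x | ∃ n < N + 1, x ∈ S n} ⊆ {x | ∃ n < N, x ∈ S n} ∪ S N := by
      rintro x ⟨n, hn, hx⟩
      rcases Nat.lt_succ_iff_lt_or_eq.1 hn with h | h
      · exact Or.inl ⟨n, h, hx⟩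
      · subst h; exact Or.inr hx
    rw [Finset.sum_range_succ, Nat.cast_add]
    exact (encard_le_encard h1).trans ((encard_union_le _ _).trans
      (add_le_add (ih fun n hn => hS n (by omega)) (hS N (by omega))))

theorem stmt12 (B : ℕ → Set (ℕ × ℕ)) (hB : IsPartition B)
    (h : IsPJIdeal SelI (EDPart B)) :
    ¬ ∃ T : ℕ → Set (Set (ℕ × ℕ)),
      (∀ k : ℕ, IsMonoTower B (k : ℕ∞) (k : ℕ∞) (T k)) ∧ EssDiff B T := by
  rintro ⟨T, hT, hE⟩
  have h1 : ∀ k : ℕ, ∃ g : ℕ → Set (ℕ × ℕ), (∀ n < k, g n ∈ T k) ∧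
      ∀ n < k, ∀ n' < k, g n = g n' → n = n' := by
    intro k
    have hk := (hT k).1.1
    have hfin : (T k).Finite := finite_of_encard_eq_coe hk
    have hn : Nat.card (T k) = k := by
      change (T k).ncard = k
      rw [ncard_def, hk]; rfl
    haveI := hfin.to_subtype
    let e : Fin k ≃ T k := (Finite.equivFinOfCardEq hn).symm
    refine ⟨fun n => if hn : n < k then (e ⟨n, hn⟩ : Set (ℕ × ℕ)) else ∅, ?_, ?_⟩
    · intro n hn
      simp only [hn, dif_pos]
      exact (e ⟨n, hn⟩).2
    · intro n hn n' hn' heq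
      simp only [hn, hn', dif_pos] at heq
      have := e.injective (Subtype.ext heq)
      simpa using this
  choose g hg hginj using h1
  have h2 : ∀ k n, ∃ c, n < k → g k n ⊆ B c := by
    intro k n
    by_cases hn : n < k
    · obtain ⟨c, hc⟩ := (hT k).2 _ (hg k n hn)
      exact ⟨c, fun _ => hc⟩
    · exact ⟨0, fun h => absurd h hn⟩
  choose c hc using h2
  have h3 := fun k => (hT k).1.2.2.1
  choose a ha hdom using h3
  -- the functions
  let f : ℕ → Set (ℕ × ℕ) := fun n => {p | ∃ k, n < k ∧ p ∈ g k n}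
  have hf : ∀ n, f n ∈ SelI := by
    intro n
    refine ⟨1, fun x => ?_⟩
    rw [Nat.cast_one, encard_le_one_iff]
    rintro p q ⟨⟨k, hk, hp⟩, hpx⟩ ⟨⟨k', hk', hq⟩, hqx⟩
    have hpx : p.1 = x := hpx
    have hqx : q.1 = x := hqx
    have hkk : k = k' := by
      by_contra hne
      have := (hE k k' hne).2
      have hx : x ∈ towerDom (T k) ∩ towerDom (T k') := by
        constructor
        · exact mem_biUnion (hg k n hk) ⟨p, hp, hpx⟩
        · exact mem_biUnion (hg k' n hk') ⟨q, hq, hqx⟩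
      rw [this] at hx; exact hx
    subst hkk
    exact ((hT k).1.2.1 _ (hg k n hk)).1 p hp q hq (hpx.trans hqx.symm)
  obtain ⟨A, ⟨m, hA⟩, hfA⟩ := h f hf
  choose M hM using hfA
  have h4 : ∀ n, ∃ K, ∀ k, K ≤ k → n < k → (g k n \ A).encard ≤ (M n : ℕ∞) := by
    intro n
    have hfin : {k | n < k ∧ (M n : ℕ∞) < (g k n \ A).encard}.Finite := by
      refine Finite.of_finite_image (f := fun k => c k n) ((hM n).subset ?_) ?_
      · rintro _ ⟨k, ⟨hk, hlt⟩, rfl⟩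
        refine lt_of_lt_of_le hlt (encard_le_encard ?_)
        rintro p ⟨hp, hpA⟩
        exact ⟨⟨⟨k, hk, hp⟩, hpA⟩, hc k n hk hp⟩
      · rintro k ⟨hk, -⟩ k' ⟨hk', -⟩ heq
        by_contra hne
        have heq : c k n = c k' n := heq
        have hx : c k n ∈ towerColors B (T k) ∩ towerColors B (T k') :=
          ⟨⟨_, hg k n hk, hc k n hk⟩, ⟨_, hg k' n hk', heq ▸ hc k' n hk'⟩⟩
        rw [(hE k k' hne).1] at hx; exact hx
    obtain ⟨K, hK⟩ := hfin.bddAbove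
    refine ⟨K + 1, fun k hk hn => ?_⟩
    by_contra hcon
    have := hK (show k ∈ {k | n < k ∧ (M n : ℕ∞) < (g k n \ A).encard} from
      ⟨hn, not_le.1 hcon⟩)
    omega
  choose K hK using h4
  let S := ∑ n ∈ Finset.range (m + 1), M n
  let k := (∑ n ∈ Finset.range (m + 1), K n) + S + m + 2
  have hkK : ∀ n < m + 1, K n ≤ k := by
    intro n hn
    have := Finset.single_le_sum (f := K) (fun i _ => Nat.zero_le _) (Finset.mem_range.2 hn)
    simp only [k]; omega
  have hbad := aux_union (m + 1) (fun n => Prod.fst '' (g k n \ A)) M (fun n hn =>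
    (encard_image_le _ _).trans (hK n k (hkK n hn) (by simp only [k]; omega)))
  have hx : ∃ x ∈ a k, x ∉ {x | ∃ n < m + 1, x ∈ Prod.fst '' (g k n \ A)} := by
    by_contra hcon
    push Not at hcon
    have h5 := (encard_le_encard (show a k ⊆ _ from hcon)).trans hbad
    rw [ha k] at h5
    have : k ≤ S := by exact_mod_cast h5
    simp only [k] at this; omega
  obtain ⟨x, hxa, hx⟩ := hx
  have h6 : ∀ n : Fin (m + 1), ∃ p, p ∈ g k n ∧ p.1 = x ∧ p ∈ A := by
    intro n
    have hnk : (n : ℕ) < k := by have := n.2; simp only [k]; omega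
    rw [← hdom k _ (hg k n hnk)] at hxa
    obtain ⟨p, hp, hpx⟩ := hxa
    refine ⟨p, hp, hpx, ?_⟩
    by_contra hpA
    exact hx ⟨n, n.2, p, ⟨hp, hpA⟩, hpx⟩
  choose p hp hpx hpA using h6
  have hinj : Function.Injective p := by
    intro i j hij
    have hik : (i : ℕ) < k := by have := i.2; simp only [k]; omega
    have hjk : (j : ℕ) < k := by have := j.2; simp only [k]; omega
    by_contra hne
    have := (hT k).1.2.2.2 _ (hg k i hik) _ (hg k j hjk)
      (fun h => hne (Fin.ext (hginj k _ hik _ hjk h)))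
    have hmem : p i ∈ g k i ∩ g k j := ⟨hp i, hij ▸ hp j⟩
    rw [this] at hmem; exact hmem
  have h7 : (range p).encard ≤ (m : ℕ∞) :=
    (encard_le_encard (by rintro _ ⟨i, rfl⟩; exact ⟨hpA i, hpx i⟩)).trans (hA x)
  rw [← image_univ, hinj.encard_image, encard_univ] at h7
  simp at h7
  have : m + 1 ≤ m := by exact_mod_cast h7
  omega
end

section
/- Let B be a partition of ℕ×ℕ into infinitely many infinite sets. If the ideal Sel on ℕ×ℕ is a P(FinFin(B))-ideal, then there is no sequence ⟨T_k : k ∈ ℕ⟩ of essentially different towers such that each T_k is an (ω,k)-tower of B-monochromatic functions. -/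
open Set

theorem stmt13 (B : ℕ → Set (ℕ × ℕ)) (hB : IsPartition B)
    (h : IsPJIdeal SelI (FinFinPart B)) :
    ¬ ∃ T : ℕ → Set (Set (ℕ × ℕ)),
      (∀ k : ℕ, IsMonoTower B ⊤ (k : ℕ∞) (T k)) ∧ EssDiff B T := by
  rintro ⟨T, hT, hD⟩
  have hen : ∀ k : ℕ, ∃ e : ℕ → Set (ℕ × ℕ), (∀ i < k, e i ∈ T k) ∧
      ∀ i < k, ∀ j < k, e i = e j → i = j := by
    intro k
    have hc : (T k).encard = (k : ℕ∞) := (hT k).1.1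
    have hfin : (T k).Finite := Set.finite_of_encard_eq_coe hc
    have hcard : hfin.toFinset.card = k := by
      rw [hfin.encard_eq_coe_toFinset_card] at hc
      exact_mod_cast hc
    let E := Finset.equivFinOfCardEq hcard
    refine ⟨fun i => if hi : i < k then (E.symm ⟨i, hi⟩ : Set (ℕ × ℕ)) else ∅, ?_, ?_⟩
    · intro i hi
      simp only [hi, dif_pos]
      exact hfin.mem_toFinset.1 (E.symm ⟨i, hi⟩).2
    · intro i hi j hj hij
      simp only [hi, hj, dif_pos] at hij
      have := E.symm.injective (Subtype.ext hij)
      simpa using this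
  choose g hg hinj using hen
  let f : ℕ → Set (ℕ × ℕ) := fun i => {p | ∃ k, i < k ∧ p ∈ g k i}
  have hdom : ∀ k i p, i < k → p ∈ g k i → p.1 ∈ towerDom (T k) := by
    intro k i p hi hp
    simp only [towerDom, Set.mem_iUnion]
    exact ⟨g k i, hg k i hi, p, hp, rfl⟩
  have hfS : ∀ i, f i ∈ SelI := by
    intro i
    refine ⟨1, fun n => ?_⟩
    rw [Nat.cast_one, Set.encard_le_one_iff]
    rintro p q ⟨⟨k, hk, hp⟩, hpn⟩ ⟨⟨l, hl, hq⟩, hqn⟩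
    have hpq : p.1 = q.1 := by
      have h1 : p.1 = n := hpn
      have h2 : q.1 = n := hqn
      rw [h1, h2]
    have hkl : k = l := by
      by_contra hne
      have h1 := (hD k l hne).2
      have h2 : p.1 ∈ towerDom (T k) ∩ towerDom (T l) :=
        ⟨hdom k i p hk hp, hpq ▸ hdom l i q hl hq⟩
      rw [h1] at h2
      exact h2
    subst hkl
    exact ((hT k).1.2.1 _ (hg k i hk)).1 p hp q hq hpq
  obtain ⟨A, ⟨m, hm⟩, hA⟩ := h f hfS
  have hFF : ∀ i, {n | ((f i \ A) ∩ B n).Infinite}.Finite := by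
    intro i
    obtain ⟨Y, ⟨F, hF⟩, Z, hZ, hsub⟩ := hA i
    refine F.finite_toSet.subset ?_
    intro n hn
    by_contra hnF
    refine hn ((hF.union (hZ n)).subset ?_)
    rintro p ⟨hp, hpn⟩
    rcases hsub hp with hY | hZ'
    · left
      refine ⟨hY, ?_⟩
      simp only [Set.mem_iUnion, not_exists]
      intro j hj hpj
      have hne : n ≠ j := by
        rintro rfl
        exact hnF hj
      have h3 : p ∈ B n ∩ B j := ⟨hpn, hpj⟩
      rw [hB.2.1 n j hne] at h3
      exact h3
    · exact Or.inr ⟨hZ', hpn⟩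
  have hkey : ∀ k, m < k → ∃ i, i ≤ m ∧ (g k i \ A).Infinite := by
    intro k hk
    by_contra hcon
    have hfin : ∀ i, i ≤ m → (g k i \ A).Finite := by
      intro i hi
      by_contra h'
      exact hcon ⟨i, hi, h'⟩
    obtain ⟨a, ha, had⟩ := (hT k).1.2.2.1
    have hainf : a.Infinite := Set.encard_eq_top_iff.1 ha
    have hU : (⋃ i ∈ Set.Iic m, Prod.fst '' (g k i \ A)).Finite :=
      (Set.finite_Iic m).biUnion fun i hi => (hfin i hi).image _
    obtain ⟨x, hxa, hxU⟩ := (hainf.diff hU).nonempty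
    have hp : ∀ i : Fin (m + 1), ∃ p, p ∈ g k i ∧ p.1 = x ∧ p ∈ A := by
      intro i
      have hi : (i : ℕ) < k := by omega
      have h1 : x ∈ pdom (g k i) := by
        rw [had _ (hg k i hi)]
        exact hxa
      obtain ⟨p, hp, hpx⟩ := h1
      refine ⟨p, hp, hpx, ?_⟩
      by_contra hpA
      apply hxU
      simp only [Set.mem_iUnion]
      exact ⟨i, Nat.lt_succ_iff.1 i.2, p, ⟨hp, hpA⟩, hpx⟩
    choose p hpg hpx hpA using hp
    have hpi : Function.Injective p := by
      intro i j hij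
      have hi : (i : ℕ) < k := by omega
      have hj : (j : ℕ) < k := by omega
      apply Fin.ext
      apply hinj k i hi j hj
      by_contra hne
      have h1 := (hT k).1.2.2.2 _ (hg k i hi) _ (hg k j hj) hne
      have h2 : p i ∈ g k i ∩ g k j := ⟨hpg i, hij ▸ hpg j⟩
      rw [h1] at h2
      exact h2
    have h1 : Set.range p ⊆ A ∩ Vert x := by
      rintro _ ⟨i, rfl⟩
      exact ⟨hpA i, hpx i⟩
    have h2 := (Set.encard_le_encard h1).trans (hm x)
    rw [← Set.image_univ, hpi.encard_image, Set.encard_univ, ENat.card_eq_coe_fintype_card,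
      Fintype.card_fin] at h2
    have h3 : m + 1 ≤ m := by exact_mod_cast h2
    omega
  have hS : (⋃ i ∈ Set.Iic m, {n | ((f i \ A) ∩ B n).Infinite}).Finite :=
    (Set.finite_Iic m).biUnion fun i _ => hFF i
  have hc : ∀ k : ℕ, ∃ c, c ∈ towerColors B (T (m + 1 + k)) ∧
      c ∈ ⋃ i ∈ Set.Iic m, {n | ((f i \ A) ∩ B n).Infinite} := by
    intro k
    obtain ⟨i, hi, hinf⟩ := hkey (m + 1 + k) (by omega)
    have hik : i < m + 1 + k := by omega
    obtain ⟨c, hc⟩ := (hT (m + 1 + k)).2 _ (hg _ i hik)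
    refine ⟨c, ⟨_, hg _ i hik, hc⟩, ?_⟩
    simp only [Set.mem_iUnion]
    refine ⟨i, hi, hinf.mono ?_⟩
    rintro q ⟨hq, hqA⟩
    exact ⟨⟨⟨_, hik, hq⟩, hqA⟩, hc hq⟩
  choose c hc1 hc2 using hc
  have hci : Function.Injective c := by
    intro k l hkl
    by_contra hne
    have h1 := (hD (m + 1 + k) (m + 1 + l) (by omega)).1
    have h2 : c k ∈ towerColors B (T (m + 1 + k)) ∩ towerColors B (T (m + 1 + l)) :=
      ⟨hc1 k, hkl ▸ hc1 l⟩
    rw [h1] at h2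
    exact h2
  exact Set.infinite_of_injective_forall_mem hci hc2 hS
end

section
/- Let B = {B_n : n ∈ ℕ} be a partition of ℕ×ℕ into infinitely many infinite sets. The following are equivalent: (1) Sel is a P(Fin(B))-ideal; (2) ED is a P(Fin(B))-ideal; (3) ED ⊥ Fin(B); (4) ED ⊆↾ Fin(B); (5) Sel ⊆↾ Fin(B); (6) both Sel and Fin×∅ are P(Fin(B))-ideals; (7) ℕ×ℕ can be covered by finitely many verticals V_n, finitely many sets B_n, and finitely many graphs of functions from ℕ to ℕ; (8) there is no sequence ⟨T_k : k ∈ ℕ⟩ of essentially different towers such that each T_k is a (1,k)-tower of B-monochromatic functions. -/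
open Set

def PP (B : ℕ → Set (ℕ × ℕ)) : Prop :=
  ∃ (F : Finset ℕ) (m N : ℕ), ∀ n, N ≤ n → (Vert n \ ⋃ i ∈ F, B i).encard ≤ (m : ℕ∞)

def Nice (B : ℕ → Set (ℕ × ℕ)) (a : ℕ → ℕ) (p : ℕ → ℕ → ℕ × ℕ) : Prop :=
  StrictMono a ∧ (∀ k i, i < k → (p k i).1 = a k) ∧
  (∀ k i j, i < k → j < k → p k i = p k j → i = j) ∧
  (∀ k l i j n, k < l → i < k → j < l → p k i ∈ B n → p l j ∈ B n → False)

lemma exists_enum {s : Set (ℕ × ℕ)} {m : ℕ} (h : (m : ℕ∞) ≤ s.encard) :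
    ∃ e : ℕ → ℕ × ℕ, (∀ i, i < m → e i ∈ s) ∧
      ∀ i j, i < m → j < m → e i = e j → i = j := by
  obtain ⟨t, hts, ht⟩ := Set.exists_subset_encard_eq h
  have hfin : t.Finite := Set.finite_of_encard_eq_coe ht
  obtain ⟨u, rfl⟩ := hfin.exists_finset_coe
  rw [Set.encard_coe_eq_coe_finsetCard] at ht
  have hc : u.card = m := by exact_mod_cast ht
  let E := u.equivFinOfCardEq hc
  refine ⟨fun i => if h : i < m then (E.symm ⟨i, h⟩ : ℕ × ℕ) else (0, 0), ?_, ?_⟩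
  · intro i hi
    simp only [hi, dif_pos]
    exact hts (E.symm ⟨i, hi⟩).2
  · intro i j hi hj hij
    simp only [hi, hj, dif_pos] at hij
    have := E.symm.injective (Subtype.ext hij)
    simpa using this

lemma exists_color {B : ℕ → Set (ℕ × ℕ)} (hB : IsPartition B) :
    ∃ c : ℕ × ℕ → ℕ, ∀ p n, p ∈ B n ↔ c p = n := by
  have h : ∀ p : ℕ × ℕ, ∃ n, p ∈ B n := fun p => by
    have : p ∈ ⋃ n, B n := by rw [hB.2.2]; trivial
    simpa using this
  choose c hc using h
  refine ⟨c, fun p n => ⟨fun hp => ?_, fun h => h ▸ hc p⟩⟩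
  by_contra hne
  have : p ∈ B (c p) ∩ B n := ⟨hc p, hp⟩
  rw [hB.2.1 _ _ hne] at this
  exact this

lemma exists_nice {B : ℕ → Set (ℕ × ℕ)} (hB : IsPartition B) (h : ¬ PP B) :
    ∃ a p, Nice B a p := by
  obtain ⟨c, hc⟩ := exists_color hB
  have h1 : ∀ (F : Finset ℕ) (m N : ℕ), ∃ n, ∃ e : ℕ → ℕ × ℕ, N ≤ n ∧
      (∀ i, i < m → e i ∈ Vert n \ ⋃ i ∈ F, B i) ∧
      ∀ i j, i < m → j < m → e i = e j → i = j := by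
    intro F m N
    by_contra hcon
    apply h
    refine ⟨F, m, N, fun n hn => ?_⟩
    by_contra hlt
    obtain ⟨e, he⟩ := exists_enum (le_of_lt (not_le.mp hlt))
    exact hcon ⟨n, e, hn, he⟩
  choose n e hN hmem hinj using h1
  let st : ℕ → Finset ℕ × ℕ := fun k => Nat.rec (∅, 0)
    (fun k s => (s.1 ∪ (Finset.range k).image (fun i => c (e s.1 k s.2 i)), n s.1 k s.2 + 1)) k
  have hst : ∀ k, st (k+1) = ((st k).1 ∪ (Finset.range k).image
      (fun i => c (e (st k).1 k (st k).2 i)), n (st k).1 k (st k).2 + 1) := fun k => rfl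
  have hmono : Monotone (fun k => (st k).1) := by
    apply monotone_nat_of_le_succ
    intro k
    simp only [hst k]
    exact Finset.subset_union_left
  refine ⟨fun k => n (st k).1 k (st k).2, fun k => e (st k).1 k (st k).2, ?_, ?_, ?_, ?_⟩
  · apply strictMono_nat_of_lt_succ
    intro k
    have := hN (st (k+1)).1 (k+1) (st (k+1)).2
    have h2 : (st (k+1)).2 = n (st k).1 k (st k).2 + 1 := by rw [hst k]
    omega
  · intro k i hi
    exact (hmem _ _ _ i hi).1
  · intro k i j hi hj
    exact hinj _ _ _ i j hi hj
  · intro k l i j r hkl hi hj hk hl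
    have h1 : r ∈ (st (k+1)).1 := by
      rw [hst k]
      apply Finset.mem_union_right
      rw [Finset.mem_image]
      exact ⟨i, Finset.mem_range.mpr hi, (hc _ _).1 hk⟩
    have h2 : r ∈ (st l).1 := hmono (Nat.succ_le_of_lt hkl) h1
    apply (hmem _ _ _ j hj).2
    simp only [Set.mem_iUnion]
    exact ⟨r, h2, hl⟩

lemma nice_tower {B : ℕ → Set (ℕ × ℕ)} (hB : IsPartition B) {a p} (h : Nice B a p) :
    ∃ T : ℕ → Set (Set (ℕ × ℕ)),
        (∀ k : ℕ, IsMonoTower B 1 (k : ℕ∞) (T k)) ∧ EssDiff B T := by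
  obtain ⟨c, hc⟩ := exists_color hB
  obtain ⟨ha, hp, hinj, hcol⟩ := h
  have hcd : ∀ k l, k < l → ∀ i j, i < k → j < l → c (p k i) ≠ c (p l j) := by
    intro k l hkl i j hi hj he
    exact hcol k l i j (c (p l j)) hkl hi hj ((hc _ _).2 he) ((hc _ _).2 rfl)
  have hcd' : ∀ k l, k ≠ l → ∀ i j, i < k → j < l → c (p k i) ≠ c (p l j) := by
    intro k l hkl i j hi hj
    rcases lt_or_gt_of_ne hkl with h | h
    · exact hcd k l h i j hi hj
    · exact (hcd l k h j i hj hi).symm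
  refine ⟨fun k => (fun i => ({p k i} : Set (ℕ × ℕ))) '' (Set.Iio k), ?_, ?_⟩
  · intro k
    refine ⟨⟨?_, ?_, ?_, ?_⟩, ?_⟩
    · rw [Set.InjOn.encard_image]
      · rw [← Finset.coe_Iio, Set.encard_coe_eq_coe_finsetCard]; simp
      · intro i hi j hj hij
        exact hinj k i j hi hj (Set.singleton_injective hij)
    · rintro _ ⟨i, hi, rfl⟩
      refine ⟨?_, Set.singleton_nonempty _⟩
      intro x hx y hy _
      rw [Set.mem_singleton_iff] at hx hy
      rw [hx, hy]
    · refine ⟨{a k}, Set.encard_singleton _, ?_⟩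
      rintro _ ⟨i, hi, rfl⟩
      simp only [pdom, Set.image_singleton, hp k i hi]
    · rintro _ ⟨i, hi, rfl⟩ _ ⟨j, hj, rfl⟩ hne
      simp only [Set.singleton_inter_eq_empty, Set.mem_singleton_iff]
      intro h
      apply hne
      simp only [h]
    · rintro _ ⟨i, hi, rfl⟩
      exact ⟨c (p k i), Set.singleton_subset_iff.2 ((hc _ _).2 rfl)⟩
  · intro k l hkl
    constructor
    · rw [Set.eq_empty_iff_forall_notMem]
      rintro r ⟨⟨_, ⟨i, hi, rfl⟩, h1⟩, ⟨_, ⟨j, hj, rfl⟩, h2⟩⟩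
      have h1 := (hc _ _).1 (Set.singleton_subset_iff.1 h1)
      have h2 := (hc _ _).1 (Set.singleton_subset_iff.1 h2)
      exact hcd' k l hkl i j hi hj (h1.trans h2.symm)
    · rw [Set.eq_empty_iff_forall_notMem]
      rintro r ⟨h1, h2⟩
      simp only [towerDom, Set.mem_iUnion] at h1 h2
      obtain ⟨_, ⟨i, hi, rfl⟩, h1⟩ := h1
      obtain ⟨_, ⟨j, hj, rfl⟩, h2⟩ := h2
      simp only [pdom, Set.image_singleton, hp k i hi, hp l j hj, Set.mem_singleton_iff] at h1 h2
      exact hkl (ha.injective (h1.symm.trans h2))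

lemma sel_sub_ed {X : Set (ℕ × ℕ)} (h : X ∈ SelI) : X ∈ EDI := by
  obtain ⟨m, hm⟩ := h
  refine ⟨m, ?_⟩
  convert Set.finite_empty
  ext n
  simp only [Set.mem_setOf_eq, Set.mem_empty_iff_false, iff_false, not_lt]
  exact hm n

lemma weak_PP {B : ℕ → Set (ℕ × ℕ)} (hB : IsPartition B)
    (h : ∀ f : ℕ → Set (ℕ × ℕ), (∀ n, f n ∈ SelI) → ∃ A ∈ EDI, ∀ n, f n \ A ∈ FinPart B) :
    PP B := by
  by_contra hP
  obtain ⟨a, p, ha, hp, hinj, hcol⟩ := exists_nice hB hP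
  obtain ⟨A, ⟨m, hA⟩, hf⟩ := h (fun i => (fun k => p k i) '' Set.Ioi i) (by
    intro i
    refine ⟨1, fun n => ?_⟩
    rw [Nat.cast_one, Set.encard_le_one_iff]
    rintro _ _ ⟨⟨k, hk, rfl⟩, h1⟩ ⟨⟨l, hl, rfl⟩, h2⟩
    have h1 : (p k i).1 = n := h1
    have h2 : (p l i).1 = n := h2
    rw [hp k i hk] at h1
    rw [hp l i hl] at h2
    have : k = l := ha.injective (h1.trans h2.symm)
    rw [this])
  -- for each i, only finitely many k > i have p k i outside A
  have hbad : ∀ i, {k | i < k ∧ p k i ∉ A}.Finite := by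
    intro i
    obtain ⟨F, hF⟩ := hf i
    have hs : {k | i < k ∧ p k i ∉ A} ⊆
        (⋃ n ∈ F, {k | i < k ∧ p k i ∈ B n}) ∪
        {k | i < k ∧ p k i ∈ ((fun k => p k i) '' Set.Ioi i \ A) \ ⋃ n ∈ F, B n} := by
      rintro k ⟨hk, hkA⟩
      by_cases hb : p k i ∈ ⋃ n ∈ F, B n
      · left
        simp only [Set.mem_iUnion] at hb ⊢
        obtain ⟨n, hn, hb⟩ := hb
        exact ⟨n, hn, hk, hb⟩
      · right
        exact ⟨hk, ⟨⟨k, hk, rfl⟩, hkA⟩, hb⟩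
    refine Set.Finite.subset (Set.Finite.union ?_ ?_) hs
    · apply F.finite_toSet.biUnion
      intro n _
      apply Set.Subsingleton.finite
      rintro k ⟨hk, h1⟩ l ⟨hl, h2⟩
      by_contra hne
      rcases lt_or_gt_of_ne hne with h | h
      · exact hcol k l i i n h hk hl h1 h2
      · exact hcol l k i i n h hl hk h2 h1
    · refine Set.Finite.of_finite_image (f := fun k => p k i) (hF.subset ?_) ?_
      · rintro _ ⟨k, hk, rfl⟩
        exact hk.2
      · rintro k ⟨hk, _⟩ l ⟨hl, _⟩ hkl
        apply ha.injective
        rw [← hp k i hk, ← hp l i hl]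
        exact congrArg Prod.fst hkl
  have hfin : ((⋃ i ∈ Finset.range (m+1), {k | i < k ∧ p k i ∉ A}) ∪
      (a ⁻¹' {n | (m : ℕ∞) < (A ∩ Vert n).encard})).Finite := by
    apply Set.Finite.union
    · exact (Finset.range (m+1)).finite_toSet.biUnion (fun i _ => hbad i)
    · exact hA.preimage ha.injective.injOn
  obtain ⟨k, hk, hkm⟩ := hfin.infinite_compl.exists_gt (m + 1)
  simp only [Set.mem_compl_iff, Set.mem_union, Set.mem_iUnion, not_or, Set.mem_preimage,
    Set.mem_setOf_eq, not_lt, Finset.mem_range, not_exists, not_and, not_not] at hk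
  obtain ⟨hk1, hk2⟩ := hk
  have : ((fun i => p k i) '' Set.Iio (m+1)).encard = ((m+1 : ℕ) : ℕ∞) := by
    rw [Set.InjOn.encard_image]
    · rw [← Finset.coe_Iio, Set.encard_coe_eq_coe_finsetCard]; simp
    · intro i hi j hj hij
      simp only [Set.mem_Iio] at hi hj
      exact hinj k i j (by omega) (by omega) hij
  have hle : ((fun i => p k i) '' Set.Iio (m+1)) ⊆ A ∩ Vert (a k) := by
    rintro _ ⟨i, hi, rfl⟩
    simp only [Set.mem_Iio] at hi
    exact ⟨hk1 i (by omega) (by omega), hp k i (by omega)⟩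
  have h3 := (Set.encard_le_encard hle).trans hk2
  rw [this] at h3
  have : m + 1 ≤ m := by exact_mod_cast h3
  omega

lemma PP_noTower {B : ℕ → Set (ℕ × ℕ)} (h : PP B) :
    ¬ ∃ T : ℕ → Set (Set (ℕ × ℕ)),
        (∀ k : ℕ, IsMonoTower B 1 (k : ℕ∞) (T k)) ∧ EssDiff B T := by
  rintro ⟨T, hT, hE⟩
  obtain ⟨F, m, N, h⟩ := h
  have hfin : ((⋃ n ∈ F, {k | n ∈ towerColors B (T k)}) ∪
      (⋃ n ∈ Finset.range N, {k | n ∈ towerDom (T k)})).Finite := by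
    apply Set.Finite.union
    · apply F.finite_toSet.biUnion
      intro n _
      apply Set.Subsingleton.finite
      intro k hk l hl
      by_contra hne
      have : n ∈ towerColors B (T k) ∩ towerColors B (T l) := ⟨hk, hl⟩
      rw [(hE k l hne).1] at this
      exact this
    · apply (Finset.range N).finite_toSet.biUnion
      intro n _
      apply Set.Subsingleton.finite
      intro k hk l hl
      by_contra hne
      have : n ∈ towerDom (T k) ∩ towerDom (T l) := ⟨hk, hl⟩
      rw [(hE k l hne).2] at this
      exact this
  obtain ⟨k, hk, hkm⟩ := hfin.infinite_compl.exists_gt (m + 1)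
  simp only [Set.mem_compl_iff, Set.mem_union, Set.mem_iUnion, not_or,
    Set.mem_setOf_eq, Finset.mem_range, not_exists] at hk
  obtain ⟨hk1, hk2⟩ := hk
  obtain ⟨⟨hcard, hne, ⟨d, hd, hdom⟩, hdisj⟩, hmono⟩ := hT k
  obtain ⟨n, rfl⟩ := Set.encard_eq_one.1 hd
  have hTne : (T k).Nonempty := by
    rw [← Set.encard_ne_zero, hcard]
    simp only [ne_eq, Nat.cast_eq_zero]; omega
  have hn : N ≤ n := by
    obtain ⟨g, hg⟩ := hTne
    by_contra hlt
    apply hk2 n (by omega)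
    simp only [towerDom, Set.mem_iUnion]
    exact ⟨g, hg, by rw [hdom g hg]; rfl⟩
  have hpt : ∀ g : Set (ℕ × ℕ), ∃ x, g ∈ T k → x ∈ g := by
    intro g
    by_cases hg : g ∈ T k
    · obtain ⟨x, hx⟩ := (hne g hg).2
      exact ⟨x, fun _ => hx⟩
    · exact ⟨(0, 0), fun h => absurd h hg⟩
  choose x hx using hpt
  have himg : x '' (T k) ⊆ Vert n \ ⋃ i ∈ F, B i := by
    rintro _ ⟨g, hg, rfl⟩
    constructor
    · have : (x g).1 ∈ pdom g := ⟨x g, hx g hg, rfl⟩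
      rw [hdom g hg] at this
      exact this
    · intro hmem
      simp only [Set.mem_iUnion] at hmem
      obtain ⟨i, hi, hmem⟩ := hmem
      refine hk1 i hi ⟨g, hg, ?_⟩
      intro y hy
      have h1 : y.1 = n := by
        have : y.1 ∈ pdom g := ⟨y, hy, rfl⟩
        rw [hdom g hg] at this
        exact this
      have h2 : (x g).1 = n := by
        have : (x g).1 ∈ pdom g := ⟨x g, hx g hg, rfl⟩
        rw [hdom g hg] at this
        exact this
      rw [(hne g hg).1 y hy (x g) (hx g hg) (h1.trans h2.symm)]
      exact hmem
  have hinj : Set.InjOn x (T k) := by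
    intro g hg g' hg' hgg
    by_contra hne'
    have : x g ∈ g ∩ g' := ⟨hx g hg, hgg ▸ hx g' hg'⟩
    rw [hdisj g hg g' hg' hne'] at this
    exact this
  have h3 := (Set.encard_le_encard himg).trans (h n hn)
  rw [hinj.encard_image, hcard] at h3
  have : k ≤ m := by exact_mod_cast h3
  omega

lemma PP_cover {B : ℕ → Set (ℕ × ℕ)} (h : PP B) :
    ∃ (Fv Fb : Finset ℕ) (Ff : Finset (ℕ → ℕ)),
        (Set.univ : Set (ℕ × ℕ)) ⊆
          (⋃ n ∈ Fv, Vert n) ∪ (⋃ n ∈ Fb, B n) ∪ ⋃ f ∈ Ff, totGraph f := by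
  classical
  obtain ⟨F, m, N, h⟩ := h
  have h1 : ∀ n, ∃ e : ℕ → ℕ, N ≤ n → ∀ x ∈ Vert n \ ⋃ i ∈ F, B i, ∃ i < m, e i = x.2 := by
    intro n
    by_cases hn : N ≤ n
    · have hfin : (Vert n \ ⋃ i ∈ F, B i).Finite :=
        Set.finite_of_encard_le_coe (h n hn)
      obtain ⟨u, hu⟩ := hfin.exists_finset_coe
      have hc := h n hn
      rw [← hu, Set.encard_coe_eq_coe_finsetCard] at hc
      have hc : u.card ≤ m := by exact_mod_cast hc
      let E := u.equivFin
      refine ⟨fun i => if h : i < u.card then (E.symm ⟨i, h⟩ : ℕ × ℕ).2 else 0, fun _ x hx => ?_⟩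
      rw [← hu] at hx
      refine ⟨E ⟨x, hx⟩, lt_of_lt_of_le (E ⟨x, hx⟩).2 hc, ?_⟩
      simp
    · exact ⟨fun _ => 0, fun h => absurd h hn⟩
  choose e he using h1
  refine ⟨Finset.range N, F, (Finset.range m).image (fun i n => e n i), ?_⟩
  intro x _
  by_cases hx : x.1 < N
  · left; left
    simp only [Set.mem_iUnion]
    exact ⟨x.1, Finset.mem_range.2 hx, rfl⟩
  by_cases hxB : x ∈ ⋃ i ∈ F, B i
  · left; right; exact hxB
  · right
    obtain ⟨i, hi, hei⟩ := he x.1 (not_lt.1 hx) x ⟨rfl, hxB⟩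
    simp only [Set.mem_iUnion]
    exact ⟨fun n => e n i, Finset.mem_image.2 ⟨i, Finset.mem_range.2 hi, rfl⟩, hei⟩

lemma cover_PP {B : ℕ → Set (ℕ × ℕ)}
    (h : ∃ (Fv Fb : Finset ℕ) (Ff : Finset (ℕ → ℕ)),
        (Set.univ : Set (ℕ × ℕ)) ⊆
          (⋃ n ∈ Fv, Vert n) ∪ (⋃ n ∈ Fb, B n) ∪ ⋃ f ∈ Ff, totGraph f) : PP B := by
  classical
  obtain ⟨Fv, Fb, Ff, h⟩ := h
  refine ⟨Fb, Ff.card, Fv.sup id + 1, fun n hn => ?_⟩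
  have hs : (Vert n \ ⋃ i ∈ Fb, B i) ⊆ ((Ff.image (fun f => (n, f n)) : Finset (ℕ × ℕ)) :
      Set (ℕ × ℕ)) := by
    rintro ⟨x, y⟩ ⟨hx, hxB⟩
    have hx : x = n := hx
    subst hx
    rcases h (Set.mem_univ (x, y)) with (hv | hb) | hf
    · simp only [Set.mem_iUnion] at hv
      obtain ⟨k, hk, hv⟩ := hv
      have hv : x = k := hv
      have : k ≤ Fv.sup id := Finset.le_sup (f := id) hk
      omega
    · exact absurd hb hxB
    · simp only [Set.mem_iUnion] at hf
      obtain ⟨f, hf, hxy⟩ := hf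
      have hxy : f x = y := hxy
      simp only [Finset.coe_image, Set.mem_image]
      exact ⟨f, hf, by rw [hxy]⟩
  refine (Set.encard_le_encard hs).trans ?_
  rw [Set.encard_coe_eq_coe_finsetCard]
  exact_mod_cast Finset.card_image_le

lemma finPart_subset {B : ℕ → Set (ℕ × ℕ)} {X Y : Set (ℕ × ℕ)} (h : X ∈ FinPart B)
    (hYX : Y ⊆ X) : Y ∈ FinPart B := by
  obtain ⟨F, hF⟩ := h
  exact ⟨F, hF.subset (Set.diff_subset_diff_left hYX)⟩

lemma PP_orth {B : ℕ → Set (ℕ × ℕ)} (h : PP B) : Orth EDI (FinPart B) := by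
  obtain ⟨F, m, N, h⟩ := h
  refine ⟨(⋃ i ∈ F, B i)ᶜ, ⟨m, ?_⟩, ⟨F, by simp⟩⟩
  refine (Set.finite_Iio N).subset ?_
  intro n hn
  by_contra hlt
  have h1 := h n (not_lt.1 hlt)
  rw [Set.diff_eq, Set.inter_comm] at h1
  exact absurd hn (not_lt.2 h1)

lemma PP_sel {B : ℕ → Set (ℕ × ℕ)} (h : PP B) : SubRestr SelI (FinPart B) := by
  obtain ⟨F, m, N, h⟩ := h
  refine ⟨{p | N ≤ p.1 ∧ p ∉ ⋃ i ∈ F, B i}, ⟨m, fun n => ?_⟩, ?_⟩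
  · by_cases hn : N ≤ n
    · refine (Set.encard_le_encard ?_).trans (h n hn)
      rintro p ⟨⟨_, h1⟩, h2⟩
      exact ⟨h2, h1⟩
    · have : {p : ℕ × ℕ | N ≤ p.1 ∧ p ∉ ⋃ i ∈ F, B i} ∩ Vert n = ∅ := by
        rw [Set.eq_empty_iff_forall_notMem]
        rintro p ⟨⟨h1, _⟩, h2⟩
        have h2 : p.1 = n := h2
        omega
      rw [this]; simp
  · rintro A ⟨r, hr⟩
    refine ⟨F, ?_⟩
    refine Set.Finite.subset ((Finset.range N).finite_toSet.biUnion
      (t := fun n => A ∩ Vert n) (fun n _ => Set.finite_of_encard_le_coe (hr n))) ?_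
    rintro p ⟨⟨hpA, hp⟩, hpB⟩
    simp only [Set.mem_iUnion]
    refine ⟨p.1, ?_, hpA, rfl⟩
    simp only [Finset.coe_range, Set.mem_Iio]
    by_contra hlt
    exact hp ⟨not_lt.1 hlt, hpB⟩

lemma PP_vert {B : ℕ → Set (ℕ × ℕ)} (h : PP B) : IsPJIdeal FinVert (FinPart B) := by
  obtain ⟨F, m, N, h⟩ := h
  intro f hf
  refine ⟨⋃ n ∈ Finset.range N, Vert n, ⟨Finset.range N, by simp⟩, fun i => ⟨F, ?_⟩⟩
  obtain ⟨G, hG⟩ := hf i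
  refine Set.Finite.subset (hG.union ((G.filter (fun n => N ≤ n)).finite_toSet.biUnion
      (t := fun n => Vert n \ ⋃ i ∈ F, B i) (fun n hn => Set.finite_of_encard_le_coe
        (h n (Finset.mem_filter.1 hn).2)))) ?_
  rintro p ⟨⟨hpf, hpN⟩, hpB⟩
  by_cases hp : p ∈ ⋃ n ∈ G, Vert n
  · right
    simp only [Set.mem_iUnion] at hp ⊢
    obtain ⟨n, hn, hpn⟩ := hp
    refine ⟨n, ?_, hpn, hpB⟩
    rw [Finset.mem_coe, Finset.mem_filter]
    refine ⟨hn, ?_⟩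
    by_contra hlt
    apply hpN
    simp only [Set.mem_iUnion]
    exact ⟨n, Finset.mem_range.2 (not_le.1 hlt), hpn⟩
  · left; exact ⟨hpf, hp⟩

lemma subRestr_PJ {I J : Set (Set (ℕ × ℕ))} (h : SubRestr I J) : IsPJIdeal I J := by
  obtain ⟨E, hE, h⟩ := h
  exact fun f hf => ⟨E, hE, fun n => h _ (hf n)⟩

theorem stmt14 (B : ℕ → Set (ℕ × ℕ)) (hB : IsPartition B) :
    List.TFAE [
      IsPJIdeal SelI (FinPart B),
      IsPJIdeal EDI (FinPart B),
      Orth EDI (FinPart B),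
      SubRestr EDI (FinPart B),
      SubRestr SelI (FinPart B),
      IsPJIdeal SelI (FinPart B) ∧ IsPJIdeal FinVert (FinPart B),
      ∃ (Fv Fb : Finset ℕ) (Ff : Finset (ℕ → ℕ)),
        (Set.univ : Set (ℕ × ℕ)) ⊆
          (⋃ n ∈ Fv, Vert n) ∪ (⋃ n ∈ Fb, B n) ∪ ⋃ f ∈ Ff, totGraph f,
      ¬ ∃ T : ℕ → Set (Set (ℕ × ℕ)),
        (∀ k : ℕ, IsMonoTower B 1 (k : ℕ∞) (T k)) ∧ EssDiff B T
    ] := by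
  have h1P : IsPJIdeal SelI (FinPart B) → PP B := fun h => weak_PP hB (fun f hf => by
    obtain ⟨A, hA, h⟩ := h f hf
    exact ⟨A, sel_sub_ed hA, h⟩)
  have h2P : IsPJIdeal EDI (FinPart B) → PP B := fun h => weak_PP hB (fun f hf =>
    h f (fun n => sel_sub_ed (hf n)))
  tfae_have 7 → 3 := fun h => PP_orth (cover_PP h)
  tfae_have 3 → 4 := by
    rintro ⟨A, hA, hAc⟩
    exact ⟨A, hA, fun X _ => finPart_subset hAc (fun x hx => hx.2)⟩
  tfae_have 4 → 2 := subRestr_PJ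
  tfae_have 2 → 8 := fun h => PP_noTower (h2P h)
  tfae_have 8 → 7 := by
    intro h
    apply PP_cover
    by_contra hP
    obtain ⟨a, p, hn⟩ := exists_nice hB hP
    exact h (nice_tower hB hn)
  tfae_have 7 → 5 := fun h => PP_sel (cover_PP h)
  tfae_have 5 → 1 := subRestr_PJ
  tfae_have 1 → 7 := fun h => PP_cover (h1P h)
  tfae_have 1 → 6 := fun h => ⟨h, PP_vert (h1P h)⟩
  tfae_have 6 → 1 := fun h => h.1
  tfae_finish
end

section
/- Let B be a partition of ℕ×ℕ into infinitely many infinite sets. If Sel ⊥ Fin(B), then Fin×∅ ⊆ Fin(B); in particular V_n ∈ Fin(B) for every n ∈ ℕ. -/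
open Set

theorem stmt15 (B : ℕ → Set (ℕ × ℕ)) (hB : IsPartition B)
    (h : Orth SelI (FinPart B)) :
    FinVert ⊆ FinPart B ∧ ∀ n : ℕ, Vert n ∈ FinPart B := by
  obtain ⟨A, ⟨m, hm⟩, F, hF⟩ := h
  have hfin : ∀ n, (A ∩ Vert n).Finite := fun n =>
    Set.finite_of_encard_le_coe (hm n)
  have key : FinVert ⊆ FinPart B := by
    rintro X ⟨G, hG⟩
    refine ⟨F, ((hG.union hF).union (G.finite_toSet.biUnion fun n _ => hfin n)).subset ?_⟩
    rintro p ⟨hpX, hpF⟩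
    by_cases h1 : p ∈ ⋃ n ∈ G, Vert n
    · by_cases h2 : p ∈ A
      · right
        simp only [Set.mem_iUnion] at h1 ⊢
        obtain ⟨n, hn, hp⟩ := h1
        exact ⟨n, hn, h2, hp⟩
      · exact Or.inl (Or.inr ⟨h2, hpF⟩)
    · exact Or.inl (Or.inl ⟨hpX, h1⟩)
  refine ⟨key, fun n => key ⟨{n}, ?_⟩⟩
  simp
end

section
/- (a) For every partition B of ℕ×ℕ into infinitely many infinite sets, if Sel ⊥ Fin(B), then ED is a P(Fin(B))-ideal. (b) The converse fails: there exists a partition B of ℕ×ℕ into infinitely many infinite sets such that ED is a P(Fin(B))-ideal but Sel is not orthogonal to Fin(B) (indeed Sel ⊆ Fin(B) and ED ⊥ Fin(B)). -/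
open Set

theorem stmt16 :
    (∀ B : ℕ → Set (ℕ × ℕ), IsPartition B →
      Orth SelI (FinPart B) → IsPJIdeal EDI (FinPart B)) ∧
    (∃ B : ℕ → Set (ℕ × ℕ), IsPartition B ∧
      IsPJIdeal EDI (FinPart B) ∧ ¬ Orth SelI (FinPart B) ∧
      SelI ⊆ FinPart B ∧ Orth EDI (FinPart B)) := by
  refine ⟨fun B _ ⟨A, hA, hc⟩ f _ => ⟨A, ?_, fun n => ?_⟩, ?_⟩
  · obtain ⟨m, hm⟩ := hA
    refine ⟨m, ?_⟩
    have : {n | (m : ℕ∞) < (A ∩ Vert n).encard} = ∅ := by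
      ext n
      simpa using hm n
    rw [this]
    exact Set.finite_empty
  · obtain ⟨F, hF⟩ := hc
    exact ⟨F, hF.subset fun x hx => ⟨hx.1.2, hx.2⟩⟩
  let g : ℕ × ℕ → ℕ := fun p => if p.1 = 0 then (Nat.unpair p.2).1 + 1 else 0
  let B : ℕ → Set (ℕ × ℕ) := fun n => {p | g p = n}
  have hinf : ∀ n, (B n).Infinite := by
    intro n
    cases n with
    | zero =>
      refine Set.infinite_of_injective_forall_mem (f := fun m : ℕ => ((1, m) : ℕ × ℕ)) ?_ ?_
      · intro a b h
        simpa using h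
      · intro m
        simp [B, g]
    | succ n =>
      refine Set.infinite_of_injective_forall_mem
        (f := fun m : ℕ => ((0, Nat.pair n m) : ℕ × ℕ)) ?_ ?_
      · intro a b h
        simpa using h
      · intro m
        simp [B, g]
  have h0 : ∀ p : ℕ × ℕ, p ∉ B 0 → p.1 = 0 := by
    intro p hp
    by_contra h
    exact hp (by simp [B, g, h])
  have hsel : SelI ⊆ FinPart B := by
    rintro X ⟨m, hm⟩
    refine ⟨{0}, ?_⟩
    have hf : (X ∩ Vert 0).Finite := Set.finite_of_encard_le_coe (hm 0)
    refine hf.subset ?_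
    rintro p ⟨hp, hq⟩
    exact ⟨hp, h0 p (by simpa using hq)⟩
  have horth : Orth EDI (FinPart B) := by
    refine ⟨Vert 0, ⟨0, (Set.finite_singleton 0).subset ?_⟩, {0}, ?_⟩
    · intro n hn
      by_contra h
      have h' : n ≠ 0 := h
      have : Vert 0 ∩ Vert n = ∅ := by
        ext p
        refine ⟨fun hp => ?_, fun hp => hp.elim⟩
        have h1 : p.1 = 0 := hp.1
        have h2 : p.1 = n := hp.2
        exact h' (h2.symm.trans h1)
      simp [this] at hn
    · refine Set.finite_empty.subset ?_
      rintro p ⟨hp, hq⟩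
      exact hp (h0 p (by simpa using hq))
  refine ⟨B, ⟨hinf, ?_, ?_⟩, ?_, ?_, hsel, horth⟩
  · intro i j hij
    ext p
    refine ⟨fun hp => ?_, fun hp => hp.elim⟩
    have h1 : g p = i := hp.1
    have h2 : g p = j := hp.2
    exact hij (h1.symm.trans h2)
  · ext p
    simp [B]
  · obtain ⟨A, hA, F, hF⟩ := horth
    exact fun f _ => ⟨A, hA, fun n => ⟨F, hF.subset fun x hx => ⟨hx.1.2, hx.2⟩⟩⟩
  · rintro ⟨A, hA, F, hF⟩
    obtain ⟨G, hG⟩ := hsel hA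
    obtain ⟨k, hk⟩ := Infinite.exists_notMem_finset (F ∪ G)
    refine hinf k ((hF.union hG).subset ?_)
    intro p hp
    have hp' : g p = k := hp
    simp only [Finset.mem_union, not_or] at hk
    by_cases h : p ∈ A
    · right
      refine ⟨h, ?_⟩
      simpa [B, hp'] using hk.2
    · left
      refine ⟨h, ?_⟩
      simpa [B, hp'] using hk.1
end

section
/- Let B be a partition of ℕ×ℕ into infinitely many infinite sets. The following are equivalent: (1) Sel is a P(OFin(B))-ideal; (2) Sel ⊆↾ OFin(B); (3) there exists k ∈ ℕ such that for every m > k there is no (ω,m)-tower of B-monochromatic functions; (4) for every countable family F of functions from ℕ to ℕ there exists a finite family F' of functions from ℕ to ℕ such that for every f ∈ F and every B ∈ B, the set (graph(f) ∩ B) \ ⋃_{g∈F'} graph(g) is finite. -/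
open Set

lemma aux_cover (X : Set (ℕ × ℕ)) (hX : X ∈ SelI) :
    ∃ F' : Finset (ℕ → ℕ), X ⊆ ⋃ g ∈ F', totGraph g := by
  classical
  obtain ⟨m, hm⟩ := hX
  refine ⟨(Finset.range m).image (fun i x => Nat.nth (fun y => (x, y) ∈ X) i), ?_⟩
  rintro ⟨x, y⟩ hp
  have himg : Prod.mk x '' {y | (x, y) ∈ X} = X ∩ Vert x := by
    ext ⟨a, b⟩
    simp only [Set.mem_image, Set.mem_setOf_eq, Prod.mk.injEq, Set.mem_inter_iff, Vert]
    constructor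
    · rintro ⟨c, hc, rfl, rfl⟩; exact ⟨hc, rfl⟩
    · rintro ⟨h, rfl⟩; exact ⟨b, h, rfl, rfl⟩
  have hle : {y | (x, y) ∈ X}.encard ≤ m := by
    have := hm x
    rwa [← himg, (Prod.mk_right_injective x).encard_image] at this
  have hfin : {y | (x, y) ∈ X}.Finite := Set.finite_of_encard_le_coe hle
  have hlt : Nat.count (fun y => (x, y) ∈ X) y < m := by
    refine lt_of_lt_of_le (Nat.count_lt_card hfin hp) ?_
    have h2 := hle
    rw [hfin.encard_eq_coe_toFinset_card] at h2
    exact_mod_cast h2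
  simp only [Set.mem_iUnion]
  refine ⟨_, Finset.mem_image_of_mem _ (Finset.mem_range.2 hlt), ?_⟩
  exact Nat.nth_count (p := fun y => (x, y) ∈ X) hp

lemma aux_totGraph (f : ℕ → ℕ) : totGraph f ∈ SelI := by
  refine ⟨1, fun n => ?_⟩
  rw [Nat.cast_one, Set.encard_le_one_iff]
  rintro ⟨a, b⟩ ⟨c, d⟩ ⟨h1, h2⟩ ⟨h3, h4⟩
  simp only [totGraph, Vert, Set.mem_setOf_eq] at *
  subst h1 h3 h2; subst h4; rfl

lemma aux43 (B : ℕ → Set (ℕ × ℕ))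
    (h : ∀ F : ℕ → ℕ → ℕ, ∃ F' : Finset (ℕ → ℕ), ∀ n b : ℕ,
        ((totGraph (F n) ∩ B b) \ ⋃ g ∈ F', totGraph g).Finite) :
    ∃ k : ℕ, ∀ m : ℕ, k < m →
        ∀ T : Set (Set (ℕ × ℕ)), ¬ IsMonoTower B ⊤ (m : ℕ∞) T := by
  classical
  by_contra! hc
  choose m hm T hT using hc
  have hTf : ∀ k, (T k).Finite := fun k => Set.finite_of_encard_le_coe (hT k).1.1.le
  have hU : (insert ∅ (⋃ k, T k)).Countable :=
    (Set.countable_iUnion fun k => (hTf k).countable).insert _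
  obtain ⟨e, he⟩ := hU.exists_eq_range ⟨_, Set.mem_insert _ _⟩
  obtain ⟨F', hF'⟩ := h (fun n x => if hx : ∃ y, (x, y) ∈ e n then hx.choose else 0)
  set s := F'.card with hs
  obtain ⟨⟨hcard, hfun, ⟨a, ha, hdom⟩, hdisj⟩, hmono⟩ := hT s
  have hfin : ∀ g ∈ T s, (g \ ⋃ g ∈ F', totGraph g).Finite := by
    intro g hg
    obtain ⟨b, hb⟩ := hmono g hg
    have : g ∈ Set.range e := by
      rw [← he]; exact Or.inr (Set.mem_iUnion.2 ⟨s, hg⟩)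
    obtain ⟨n, rfl⟩ := this
    refine (hF' n b).subset (Set.diff_subset_diff_left ?_)
    rintro ⟨x, y⟩ hp
    refine ⟨?_, hb hp⟩
    have hx : ∃ y, (x, y) ∈ e n := ⟨y, hp⟩
    simp only [totGraph, Set.mem_setOf_eq, dif_pos hx]
    have := (hfun _ hg).1 _ hx.choose_spec _ hp rfl
    exact congrArg Prod.snd this
  have hbad : (⋃ g ∈ T s, Prod.fst '' (g \ ⋃ g ∈ F', totGraph g)).Finite :=
    (hTf s).biUnion fun g hg => (hfin g hg).image _
  have hainf : a.Infinite := Set.encard_eq_top_iff.1 ha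
  obtain ⟨x, hxa, hx⟩ := (hainf.diff hbad).nonempty
  have key : ∀ g ∈ T s, ∃ f ∈ F', (x, f x) ∈ g := by
    intro g hg
    have : x ∈ pdom g := by rw [hdom g hg]; exact hxa
    obtain ⟨⟨x', y⟩, hp, hxx⟩ := this
    simp only at hxx
    subst hxx
    by_contra! hcon
    refine hx (Set.mem_biUnion hg ⟨(x', y), ⟨hp, ?_⟩, rfl⟩)
    simp only [Set.mem_iUnion, not_exists]
    intro f hf hfy
    have : f x' = y := hfy
    exact hcon f hf (this ▸ hp)
  choose! φ hφ hφg using key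
  have hle : (T s).encard ≤ (F' : Set (ℕ → ℕ)).encard := by
    refine Set.encard_le_encard_of_injOn (f := φ) (fun g hg => hφ g hg) ?_
    intro g hg g' hg' hgg
    by_contra hne
    have h1 := hφg g hg
    have h2 := hφg g' hg'
    rw [← hgg] at h2
    have : (x, φ g x) ∈ g ∩ g' := ⟨h1, h2⟩
    rw [hdisj g hg g' hg' hne] at this
    exact this
  rw [hcard, Set.encard_coe_eq_coe_finsetCard] at hle
  have hle' : m s ≤ s := by exact_mod_cast hle
  exact absurd (hm s) (not_lt.2 hle')

lemma aux32 (B : ℕ → Set (ℕ × ℕ)) (hB : IsPartition B)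
    (h : ∃ k : ℕ, ∀ m : ℕ, k < m →
        ∀ T : Set (Set (ℕ × ℕ)), ¬ IsMonoTower B ⊤ (m : ℕ∞) T) :
    SubRestr SelI (OFinPart B) := by
  classical
  obtain ⟨k, hk⟩ := h
  obtain ⟨-, hdis, hun⟩ := hB
  have hcol : ∀ p, ∃ n, p ∈ B n := fun p => by
    have : p ∈ ⋃ n, B n := hun ▸ Set.mem_univ p
    simpa using this
  choose col hcol using hcol
  have huniq : ∀ p n, p ∈ B n → col p = n := by
    intro p n hp
    by_contra hne
    have : p ∈ B (col p) ∩ B n := ⟨hcol p, hp⟩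
    rw [hdis _ _ hne] at this
    exact this
  have hD : ∀ j, {x | (k : ℕ∞) < (Vert x ∩ {q | col q ≤ j}).encard}.Finite := by
    intro j
    by_contra hinf
    set D := {x | (k : ℕ∞) < (Vert x ∩ {q | col q ≤ j}).encard} with hDdef
    have h1 : ∀ x ∈ D, ∃ e : Fin (k + 1) → ℕ, Function.Injective e ∧
        ∀ i, col (x, e i) ≤ j := by
      intro x hx
      have hx' : ((k + 1 : ℕ) : ℕ∞) ≤ (Vert x ∩ {q | col q ≤ j}).encard := by
        push_cast
        exact Order.add_one_le_of_lt hx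
      obtain ⟨t, ht, htc⟩ := Set.exists_subset_encard_eq hx'
      have htf : t.Finite := Set.finite_of_encard_eq_coe htc
      have : htf.toFinset.card = k + 1 := by
        rw [htf.encard_eq_coe_toFinset_card] at htc
        exact_mod_cast htc
      let E := htf.toFinset.equivFinOfCardEq this
      have hmem : ∀ i, ((E.symm i : ℕ × ℕ)) ∈ t := fun i => htf.mem_toFinset.1 (E.symm i).2
      have hfst : ∀ i, ((E.symm i : ℕ × ℕ)).1 = x := fun i => (ht (hmem i)).1
      refine ⟨fun i => (E.symm i : ℕ × ℕ).2, ?_, ?_⟩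
      · intro i i' hii
        apply E.symm.injective
        apply Subtype.ext
        exact Prod.ext ((hfst i).trans (hfst i').symm) hii
      · intro i
        have : (x, (E.symm i : ℕ × ℕ).2) = (E.symm i : ℕ × ℕ) := Prod.ext (hfst i).symm rfl
        rw [this]
        exact (ht (hmem i)).2
    choose! e he hec using h1
    have : Infinite D := Set.infinite_coe_iff.2 hinf
    obtain ⟨c, hc⟩ := Finite.exists_infinite_fiber
      (fun x : D => fun i : Fin (k + 1) =>
        (⟨col (x, e x i), Nat.lt_succ_of_le (hec x x.2 i)⟩ : Fin (j + 1)))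
    set D' : Set ℕ := {x | x ∈ D ∧ ∀ i, col (x, e x i) = c i} with hD'
    have hD'inf : D'.Infinite := by
      have h2 := (Set.infinite_coe_iff.1 hc).image (f := Subtype.val) Subtype.val_injective.injOn
      refine h2.mono ?_
      rintro _ ⟨x, hx, rfl⟩
      refine ⟨x.2, fun i => ?_⟩
      have := congrFun (show _ = c from hx) i
      exact congrArg Fin.val this
    let G : Fin (k + 1) → Set (ℕ × ℕ) := fun i => {p | p.1 ∈ D' ∧ p.2 = e p.1 i}
    obtain ⟨x0, hx0⟩ := hD'inf.nonempty
    have hGd : ∀ i i' p, p ∈ G i → p ∈ G i' → i = i' := by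
      rintro i i' p ⟨hp, h1⟩ ⟨-, h2⟩
      exact he _ hp.1 (h1.symm.trans h2)
    have hGinj : Function.Injective G := by
      intro i i' hii
      have h1 : (x0, e x0 i) ∈ G i := ⟨hx0, rfl⟩
      exact hGd i i' _ h1 (hii ▸ h1)
    refine hk (k + 1) (Nat.lt_succ_self k) (Set.range G) ⟨⟨?_, ?_, ⟨D', ?_, ?_⟩, ?_⟩, ?_⟩
    · rw [← Set.image_univ, hGinj.encard_image, Set.encard_univ]
      simp
    · rintro _ ⟨i, rfl⟩
      refine ⟨?_, ⟨(x0, e x0 i), hx0, rfl⟩⟩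
      rintro ⟨p1, p2⟩ ⟨-, hp⟩ ⟨q1, q2⟩ ⟨-, hq⟩ h12
      simp only at hp hq h12
      subst h12 hp hq; rfl
    · exact Set.encard_eq_top_iff.2 hD'inf
    · rintro _ ⟨i, rfl⟩
      ext x
      constructor
      · rintro ⟨p, hp, rfl⟩; exact hp.1
      · intro hx; exact ⟨(x, e x i), ⟨hx, rfl⟩, rfl⟩
    · rintro _ ⟨i, rfl⟩ _ ⟨i', rfl⟩ hne
      rw [Set.eq_empty_iff_forall_notMem]
      rintro p ⟨h1, h2⟩
      exact hne (congrArg G (hGd i i' p h1 h2))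
    · rintro _ ⟨i, rfl⟩
      refine ⟨c i, ?_⟩
      rintro ⟨x, y⟩ ⟨hx, hy⟩
      simp only at hx hy
      subst hy
      rw [← hx.2 i]
      exact hcol _
  refine ⟨{p | (Vert p.1 ∩ {q | col q ≤ col p}).encard ≤ k}, ⟨k, fun n => ?_⟩, ?_⟩
  · by_contra! hlt
    have hx' : ((k + 1 : ℕ) : ℕ∞) ≤
        ({p | (Vert p.1 ∩ {q | col q ≤ col p}).encard ≤ k} ∩ Vert n).encard := by
      push_cast
      exact Order.add_one_le_of_lt hlt
    obtain ⟨t, ht, htc⟩ := Set.exists_subset_encard_eq hx'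
    have htf : t.Finite := Set.finite_of_encard_eq_coe htc
    have htn : t.Nonempty := by
      rw [← Set.encard_ne_zero, htc]
      exact_mod_cast Nat.succ_ne_zero k
    obtain ⟨p, hp, hmax⟩ := Set.exists_max_image t col htf htn
    obtain ⟨hp1, hp2⟩ := ht hp
    have hsub : t ⊆ Vert p.1 ∩ {q | col q ≤ col p} := by
      intro q hq
      refine ⟨?_, hmax q hq⟩
      have h1 : q.1 = n := (ht hq).2
      have h2 : p.1 = n := hp2
      exact h1.trans h2.symm
    have := (Set.encard_le_encard hsub).trans hp1
    rw [htc] at this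
    have : k + 1 ≤ k := by exact_mod_cast this
    omega
  · rintro A ⟨m, hm⟩ b
    refine ((hD b).biUnion (t := fun x => A ∩ Vert x)
      fun x _ => Set.finite_of_encard_le_coe (hm x)).subset ?_
    rintro p ⟨⟨hpA, hpE⟩, hpb⟩
    have := huniq p b hpb
    subst this
    have hlt : (k : ℕ∞) < (Vert p.1 ∩ {q | col q ≤ col p}).encard := not_le.1 hpE
    have hmem : p.1 ∈ {x | (k : ℕ∞) < (Vert x ∩ {q | col q ≤ col p}).encard} := hlt
    exact Set.mem_biUnion (t := fun x => A ∩ Vert x) hmem ⟨hpA, rfl⟩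

theorem stmt17 (B : ℕ → Set (ℕ × ℕ)) (hB : IsPartition B) :
    List.TFAE [
      IsPJIdeal SelI (OFinPart B),
      SubRestr SelI (OFinPart B),
      ∃ k : ℕ, ∀ m : ℕ, k < m →
        ∀ T : Set (Set (ℕ × ℕ)), ¬ IsMonoTower B ⊤ (m : ℕ∞) T,
      ∀ F : ℕ → ℕ → ℕ, ∃ F' : Finset (ℕ → ℕ), ∀ n b : ℕ,
        ((totGraph (F n) ∩ B b) \ ⋃ g ∈ F', totGraph g).Finite
    ] := by
  tfae_have 2 → 1 := by
    rintro ⟨E, hE, h⟩ f hf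
    exact ⟨E, hE, fun n => h _ (hf n)⟩
  tfae_have 1 → 4 := by
    intro h F
    obtain ⟨A, hA, h⟩ := h (fun n => totGraph (F n)) (fun n => aux_totGraph _)
    obtain ⟨F', hF'⟩ := aux_cover A hA
    refine ⟨F', fun n b => (h n b).subset ?_⟩
    rintro p ⟨⟨h1, h2⟩, h3⟩
    exact ⟨⟨h1, fun h => h3 (hF' h)⟩, h2⟩
  tfae_have 4 → 3 := aux43 B
  tfae_have 3 → 2 := aux32 B hB
  tfae_finish
end

section
/- Let B be a partition of ℕ×ℕ into infinitely many infinite sets. The following are equivalent: (1) ED is a P(OFin(B))-ideal; (2) ED ⊆↾ OFin(B); (3) ED ⊥ OFin(B); (4) both Fin×∅ and Sel are P(OFin(B))-ideals; (5) Fin×∅ ⊆↾ OFin(B) and Sel ⊆↾ OFin(B). -/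
open Set

lemma aux_sel_sub : SelI ⊆ EDI := by
  rintro X ⟨m, hm⟩
  refine ⟨m, ?_⟩
  convert Set.finite_empty (α := ℕ)
  ext n
  simpa using hm n

open Classical in
lemma aux_bdd (C A : Set (ℕ × ℕ)) (m n : ℕ) (hC : (m : ℕ∞) < (C ∩ Vert n).encard)
    (hA : (A ∩ Vert n).encard ≤ m) :
    ∃ p ∈ C, p.1 = n ∧ p ∉ A ∧ Nat.count (fun y => (p.1, y) ∈ C) p.2 ≤ m := by
  by_contra! hcon
  set P : ℕ → Prop := fun y => (n, y) ∈ C with hP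
  have him : (C ∩ Vert n) = (fun y => (n, y)) '' (setOf P) := by
    ext ⟨a, b⟩
    simp only [Vert, mem_inter_iff, mem_setOf_eq, mem_image, Prod.mk.injEq, hP]
    constructor
    · rintro ⟨h, rfl⟩; exact ⟨b, h, rfl, rfl⟩
    · rintro ⟨y, h, rfl, rfl⟩; exact ⟨h, rfl⟩
  have hinj : Function.Injective (fun y : ℕ => (n, y)) := fun a b h => by simpa using h
  rw [him, hinj.encard_image] at hC
  have hlt : ∀ i, i ≤ m → ∀ hf : (setOf P).Finite, i < hf.toFinset.card := by
    intro i hi hf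
    rw [hf.encard_eq_coe_toFinset_card] at hC
    have : m < hf.toFinset.card := by exact_mod_cast hC
    omega
  have hsub : (fun i => (n, Nat.nth P i)) '' (Set.Iic m) ⊆ A ∩ Vert n := by
    rintro _ ⟨i, hi, rfl⟩
    refine ⟨?_, rfl⟩
    by_contra hA'
    have h1 : (n, Nat.nth P i) ∈ C := Nat.nth_mem i (hlt i hi)
    have h2 := hcon _ h1 rfl hA'
    have h3 : Nat.count P (Nat.nth P i) = i := Nat.count_nth (hlt i hi)
    have h4 : m < Nat.count P (Nat.nth P i) := h2
    have : i ≤ m := hi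
    omega
  have hio : Set.InjOn (fun i => (n, Nat.nth P i)) (Set.Iic m) := by
    intro i hi j hj h
    have h' : Nat.nth P i = Nat.nth P j := by simpa using h
    rw [← Nat.count_nth (p := P) (hlt i hi), h', Nat.count_nth (hlt j hj)]
  have := (Set.encard_le_encard hsub).trans hA
  rw [hio.encard_image] at this
  have hc : (Set.Iic m).encard = ((m + 1 : ℕ) : ℕ∞) := by
    rw [← Finset.coe_Iic, Set.encard_coe_eq_coe_finsetCard, Nat.card_Iic]
  rw [hc] at this
  have : m + 1 ≤ m := by exact_mod_cast this
  omega

open Classical in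
lemma aux_part (B : ℕ → Set (ℕ × ℕ)) (I : Set (Set (ℕ × ℕ))) (h1 : SelI ⊆ I) (h2 : I ⊆ EDI)
    (h : IsPJIdeal I (OFinPart B)) (k : ℕ) : B k ∈ EDI := by
  let f : ℕ → Set (ℕ × ℕ) := fun i =>
    {p | p ∈ B k ∧ Nat.count (fun y => (p.1, y) ∈ B k) p.2 = i}
  have hf : ∀ i, f i ∈ I := by
    intro i
    apply h1
    refine ⟨1, fun n => ?_⟩
    rw [Nat.cast_one, Set.encard_le_one_iff]
    rintro ⟨a, b⟩ ⟨c, d⟩ ⟨⟨hb, hb'⟩, hv⟩ ⟨⟨hd, hd'⟩, hw⟩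
    simp only [Vert, mem_setOf_eq] at hv hw
    subst hv
    subst hw
    have : b = d := Nat.count_injective (p := fun y => (c, y) ∈ B k) hb hd (hb'.trans hd'.symm)
    rw [this]
  obtain ⟨A, hA, hfA⟩ := h f hf
  obtain ⟨m, hm⟩ := h2 hA
  refine ⟨m, ?_⟩
  have hT : (⋃ i ∈ Set.Iic m, (f i \ A) ∩ B k).Finite :=
    (Set.finite_Iic m).biUnion fun i _ => hfA i k
  refine ((hT.image Prod.fst).union hm).subset ?_
  intro n hn
  by_cases hn' : (m : ℕ∞) < (A ∩ Vert n).encard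
  · exact Or.inr hn'
  · left
    obtain ⟨p, hp, hpn, hpA, hc⟩ := aux_bdd (B k) A m n hn (not_lt.1 hn')
    refine ⟨p, ?_, hpn⟩
    simp only [mem_iUnion]
    exact ⟨_, hc, ⟨⟨hp, rfl⟩, hpA⟩, hp⟩

lemma aux_compl (B : ℕ → Set (ℕ × ℕ)) (A : Set (ℕ × ℕ))
    (h : ∀ k, B k \ A ∈ OFinPart B) : Aᶜ ∈ OFinPart B := by
  intro k
  refine (h k k).subset ?_
  rintro p ⟨hp, hk⟩
  exact ⟨⟨hk, hp⟩, hk⟩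

lemma aux_sub (B : ℕ → Set (ℕ × ℕ)) (X Y : Set (ℕ × ℕ)) (h : X ∈ OFinPart B) (hs : Y ⊆ X) :
    Y ∈ OFinPart B := fun k => (h k).subset (inter_subset_inter_left _ hs)

lemma aux_pj {α : Type*} {I J : Set (Set α)} (h : SubRestr I J) : IsPJIdeal I J := by
  obtain ⟨E, hE, h⟩ := h
  exact fun f hf => ⟨E, hE, fun n => h _ (hf n)⟩

lemma aux_one_three (B : ℕ → Set (ℕ × ℕ)) (h : IsPJIdeal EDI (OFinPart B)) :
    Orth EDI (OFinPart B) := by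
  obtain ⟨A, hA, hA'⟩ := h B (aux_part B EDI aux_sel_sub subset_rfl h)
  exact ⟨A, hA, aux_compl B A hA'⟩

lemma aux_four_three (B : ℕ → Set (ℕ × ℕ)) (h : IsPJIdeal FinVert (OFinPart B))
    (h' : IsPJIdeal SelI (OFinPart B)) : Orth EDI (OFinPart B) := by
  have hB := aux_part B SelI subset_rfl aux_sel_sub h'
  obtain ⟨E, ⟨F, hF⟩, hE⟩ := h Vert (fun n => ⟨{n}, by simp⟩)
  let W : Set (ℕ × ℕ) := ⋃ n ∈ F, Vert n
  have hW : ∀ n (p : ℕ × ℕ), p ∈ Vert n → p ∈ W → n ∈ F := by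
    intro n p hp hpW
    simp only [W, mem_iUnion] at hpW
    obtain ⟨j, hj, hpj⟩ := hpW
    have h1 : p.1 = n := hp
    have h2 : p.1 = j := hpj
    rwa [← h1, h2]
  have hfin : ∀ k n, ((B k \ W) ∩ Vert n).Finite := by
    intro k n
    refine ((hE n k).union hF).subset ?_
    rintro p ⟨⟨hp, hpW⟩, hpn⟩
    by_cases hpE : p ∈ E
    · exact Or.inr ⟨hpE, hpW⟩
    · exact Or.inl ⟨⟨hpn, hpE⟩, hp⟩
  have hsel : ∀ k, B k \ W ∈ SelI := by
    intro k
    obtain ⟨m, hm⟩ := hB k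
    let g : ℕ → ℕ := fun n => (hfin k n).toFinset.card
    refine ⟨max m (hm.toFinset.sup g), fun n => ?_⟩
    by_cases hn : (m : ℕ∞) < (B k ∩ Vert n).encard
    · rw [(hfin k n).encard_eq_coe_toFinset_card]
      have : g n ≤ hm.toFinset.sup g := Finset.le_sup (f := g) (by simpa using hn)
      exact_mod_cast this.trans (le_max_right _ _)
    · refine (Set.encard_le_encard (inter_subset_inter_left _ diff_subset)).trans
        ((not_lt.1 hn).trans ?_)
      exact_mod_cast le_max_left _ _
  obtain ⟨S, ⟨m, hm⟩, hS⟩ := h' _ hsel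
  refine ⟨W ∪ S, ⟨m, F.finite_toSet.subset ?_⟩, aux_compl B _ fun k => ?_⟩
  · intro n hn
    by_contra hnF
    refine absurd (hm n) (not_le.2 (lt_of_lt_of_le hn (Set.encard_le_encard ?_)))
    rintro p ⟨hp | hp, hpn⟩
    · exact absurd (hW n p hpn hp) hnF
    · exact ⟨hp, hpn⟩
  · rw [← diff_diff]
    exact hS k

lemma aux_three_five (B : ℕ → Set (ℕ × ℕ)) (h : Orth EDI (OFinPart B)) :
    SubRestr FinVert (OFinPart B) ∧ SubRestr SelI (OFinPart B) := by
  obtain ⟨A, ⟨m, hm⟩, hA⟩ := h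
  let W : Set (ℕ × ℕ) := ⋃ n ∈ hm.toFinset, Vert n
  have hW : ∀ p : ℕ × ℕ, p ∈ W ↔ (m : ℕ∞) < (A ∩ Vert p.1).encard := by
    intro p
    have h1 : p ∈ W ↔ p.1 ∈ hm.toFinset := by
      simp only [W, mem_iUnion]
      constructor
      · rintro ⟨n, hn, hp⟩
        have : p.1 = n := hp
        rwa [this]
      · exact fun h => ⟨p.1, h, rfl⟩
    rw [h1, Set.Finite.mem_toFinset]
    rfl
  constructor
  · refine ⟨W, ⟨hm.toFinset, by simp [W]⟩, ?_⟩
    rintro X ⟨F, hF⟩ k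
    have hfin : (⋃ n ∈ F, ((A ∩ Vert n) \ W)).Finite := by
      refine F.finite_toSet.biUnion fun n _ => ?_
      by_cases hn : (m : ℕ∞) < (A ∩ Vert n).encard
      · convert Set.finite_empty (α := ℕ × ℕ)
        refine eq_empty_of_forall_notMem ?_
        rintro p ⟨⟨_, hp⟩, hpW⟩
        have : p.1 = n := hp
        exact hpW ((hW p).2 (by rwa [this]))
      · exact (Set.finite_of_encard_le_coe (not_lt.1 hn)).subset diff_subset
    refine ((hF.union hfin).union (hA k)).subset ?_
    rintro p ⟨⟨hp, hpW⟩, hpk⟩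
    by_cases hpA : p ∈ A
    · left
      by_cases hpF : p ∈ ⋃ n ∈ F, Vert n
      · right
        simp only [mem_iUnion] at hpF ⊢
        obtain ⟨n, hn, hpn⟩ := hpF
        exact ⟨n, hn, ⟨hpA, hpn⟩, hpW⟩
      · exact Or.inl ⟨hp, hpF⟩
    · exact Or.inr ⟨hpA, hpk⟩
  · refine ⟨A \ W, ⟨m, fun n => ?_⟩, ?_⟩
    · by_cases hn : (m : ℕ∞) < (A ∩ Vert n).encard
      · refine le_of_eq_of_le (Set.encard_eq_zero.2 ?_) (zero_le)
        refine eq_empty_of_forall_notMem ?_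
        rintro p ⟨⟨_, hpW⟩, hp⟩
        have : p.1 = n := hp
        exact hpW ((hW p).2 (by rwa [this]))
      · exact (Set.encard_le_encard (inter_subset_inter_left _ diff_subset)).trans (not_lt.1 hn)
    · rintro X ⟨l, hl⟩ k
      have hfin : (⋃ n ∈ hm.toFinset, (X ∩ Vert n)).Finite :=
        hm.toFinset.finite_toSet.biUnion fun n _ => Set.finite_of_encard_le_coe (hl n)
      refine (hfin.union (hA k)).subset ?_
      rintro p ⟨⟨hp, hpW⟩, hpk⟩
      by_cases hpA : p ∈ A
      · left
        have : p ∈ W := by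
          by_contra hh
          exact hpW ⟨hpA, hh⟩
        simp only [W, mem_iUnion] at this ⊢
        obtain ⟨n, hn, hpn⟩ := this
        exact ⟨n, hn, hp, hpn⟩
      · exact Or.inr ⟨hpA, hpk⟩

theorem stmt18 (B : ℕ → Set (ℕ × ℕ)) (hB : IsPartition B) :
    List.TFAE [
      IsPJIdeal EDI (OFinPart B),
      SubRestr EDI (OFinPart B),
      Orth EDI (OFinPart B),
      IsPJIdeal FinVert (OFinPart B) ∧ IsPJIdeal SelI (OFinPart B),
      SubRestr FinVert (OFinPart B) ∧ SubRestr SelI (OFinPart B)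
    ] := by
  tfae_have 1 → 3 := aux_one_three B
  tfae_have 3 → 2 := fun ⟨A, hA, hA'⟩ =>
    ⟨A, hA, fun X _ => aux_sub B _ _ hA' (fun p hp => hp.2)⟩
  tfae_have 2 → 1 := aux_pj
  tfae_have 3 → 5 := aux_three_five B
  tfae_have 5 → 4 := fun h => ⟨aux_pj h.1, aux_pj h.2⟩
  tfae_have 4 → 3 := fun h => aux_four_three B h.1 h.2
  tfae_finish
end
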